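/- arXiv:2308.01106 — 2 statements merged into one kernel-verified Lean document; each statement's English description precedes it below -/
import Mathlib

section
/- Let η₁,…,η_t be nowhere zero holomorphic functions on ℂ^m that are multiplicatively independent, i.e., η₁^{n₁}·η₂^{n₂}·…·η_t^{n_t} is not a (nonzero) constant function for any (n₁,…,n_t) ∈ ℤ^t \ {(0,…,0)}. If a polynomial P(X₁,…,X_t) ∈ ℂ[X₁,…,X_t] satisfies P(η₁,…,η_t) ≡ 0 on ℂ^m, then P is the zero polynomial. -/
/-!
A polynomial relation `P(η₁, …, η_t) = 0` is a linear relation with constant coefficients between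
monomials in the `ηᵢ`. Multiplicative independence says that no quotient of two distinct monomials is
constant, so the claim is Borel's lemma: nowhere zero functions with pairwise nonconstant quotients are
linearly independent.

*One variable suffices.* A nonconstant quotient `G` differs from `G 0` on an open dense set
(`dense_ne_of_not_const`). As there are countably many quotients, Baire's theorem gives a line through
the origin on which all of them are nonconstant. On that line `ηᵢ` is the exponential of an entire
function (`exists_entire_log`), so the monomials become `exp (f n)` with `f n` entire.

*Borel's lemma in one variable* (`borel_lemma`). Let `M r` be the maximum on `‖z‖ ≤ r` of
`∑ ‖f i - f j‖`, and let `S` be the ring of entire functions of growth polynomial in `M` (`smallRing`).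
It is closed under derivatives and contains the differences `f i - f j`, and Wronskian elimination shows
that a linear relation over `S` between the `exp (f i)` splits into relations among exponentials that
are proportional over the fraction field of `S` (`class_sum_eq_zero`). By induction on the number of
terms all of them may be assumed proportional, that is, each `exp (f i - f j)` is a quotient of
elements of `S`. Nevanlinna's First Main Theorem together with the Poisson and Borel–Carathéodory
inequalities (`norm_le_of_ratio`) then bounds `f i - f j`, and with it `M`, by a multiple of `log M` at a
slightly larger radius. By an iteration over shrinking steps (`growth_contradiction`) this is impossible
for unbounded `M`, while bounded differences are constant by Liouville's theorem.
-/

section BorelLemma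
open Complex ValueDistribution

/-! ### Splitting linear relations between exponentials -/

/-- The ring of entire functions is a domain. -/
lemma entire_mul_eq_zero {a b : ℂ → ℂ} (ha : Differentiable ℂ a) (hb : Differentiable ℂ b)
    (h : a * b = 0) : a = 0 ∨ b = 0 := by
  by_contra! hne
  have key : ∀ {c : ℂ → ℂ}, Differentiable ℂ c → c ≠ 0 → ∀ᶠ z in nhdsWithin 0 {0}ᶜ, c z ≠ 0 := by
    intro c hc hc0
    have hA : AnalyticOnNhd ℂ c Set.univ := fun z _ => hc.analyticAt z
    rcases (hc.analyticAt 0).eventually_eq_zero_or_eventually_ne_zero with h0 | h0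
    · exact absurd (hA.eq_of_eventuallyEq (g := 0) (fun z _ => analyticAt_const) h0) hc0
    · exact h0
  obtain ⟨z, hz1, hz2⟩ := ((key ha hne.1).and (key hb hne.2)).exists
  have := congrFun h z
  simp [hz1, hz2] at this

section Alg
variable {ι : Type*}

/-- The exponentials `exp (f i)` and `exp (f j)` are proportional over the fraction field of `S`,
written without denominators. For a ring `S` of entire functions this is an equivalence relation. -/
def ExpRel (S : Subring (ℂ → ℂ)) (f : ι → ℂ → ℂ) (i j : ι) : Prop :=
  ∃ a ∈ S, ∃ b ∈ S, a ≠ 0 ∧ b ≠ 0 ∧ ∀ z, a z * exp (f i z) = b z * exp (f j z)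

variable {S : Subring (ℂ → ℂ)} {f : ι → ℂ → ℂ}

lemma ExpRel.refl (i : ι) : ExpRel S f i i :=
  ⟨1, S.one_mem, 1, S.one_mem, one_ne_zero, one_ne_zero, fun _ => rfl⟩

lemma ExpRel.symm {i j : ι} (h : ExpRel S f i j) : ExpRel S f j i := by
  obtain ⟨a, ha, b, hb, ha0, hb0, h⟩ := h
  exact ⟨b, hb, a, ha, hb0, ha0, fun z => (h z).symm⟩

lemma ExpRel.trans (hS : ∀ a ∈ S, Differentiable ℂ a) {i j k : ι} (h₁ : ExpRel S f i j)
    (h₂ : ExpRel S f j k) : ExpRel S f i k := by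
  obtain ⟨a, ha, b, hb, ha0, hb0, h⟩ := h₁
  obtain ⟨c, hc, d, hd, hc0, hd0, h'⟩ := h₂
  refine ⟨a * c, S.mul_mem ha hc, b * d, S.mul_mem hb hd, ?_, ?_, fun z => ?_⟩
  · exact fun H => (entire_mul_eq_zero (hS _ ha) (hS _ hc) H).elim ha0 hc0
  · exact fun H => (entire_mul_eq_zero (hS _ hb) (hS _ hd) H).elim hb0 hd0
  · simp only [Pi.mul_apply]
    linear_combination c z * h z + b z * h' z

/-- A combination of exponentials from the class of `j` is a multiple of `exp (f j)` over the fraction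
field of `S`; `d` is the common denominator. -/
lemma exists_sum_eq (hS : ∀ a ∈ S, Differentiable ℂ a) (a : ι → ℂ → ℂ) (j : ι) (C : Finset ι)
    (ha : ∀ i ∈ C, a i ∈ S) (hC : ∀ i ∈ C, ExpRel S f i j) :
    ∃ d ∈ S, ∃ e ∈ S, d ≠ 0 ∧ ∀ z, d z * ∑ i ∈ C, a i z * exp (f i z) = e z * exp (f j z) := by
  classical
  induction C using Finset.induction_on with
  | empty => exact ⟨1, S.one_mem, 0, S.zero_mem, one_ne_zero, by simp⟩
  | insert i C hi ih =>
    obtain ⟨d, hd, e, he, hd0, h⟩ := ih (fun k hk => ha k (Finset.mem_insert_of_mem hk))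
      (fun k hk => hC k (Finset.mem_insert_of_mem hk))
    obtain ⟨p, hp, q, hq, hp0, -, h'⟩ := hC i (Finset.mem_insert_self _ _)
    have hai := ha i (Finset.mem_insert_self _ _)
    refine ⟨d * p, S.mul_mem hd hp, p * e + d * a i * q,
      S.add_mem (S.mul_mem hp he) (S.mul_mem (S.mul_mem hd hai) hq),
      fun H => (entire_mul_eq_zero (hS _ hd) (hS _ hp) H).elim hd0 hp0, fun z => ?_⟩
    rw [Finset.sum_insert hi]
    simp only [Pi.mul_apply, Pi.add_apply]
    linear_combination p z * h z + d z * a i z * h' z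

/-- Exponentials in different `ExpRel`-classes are linearly independent over `S`: a relation with
coefficients in `S` splits into one relation per class. The induction is on a bound `N` for the number
of nonzero coefficients. With `a n ≠ 0`, the Wronskian of each term against `a n * exp (f n)` produces coefficients
`b i` with `b n = 0`, so the shorter relation splits by class; vanishing of the Wronskian of a class
sum makes that sum a constant multiple of `a n * exp (f n)`. Unless `n` lies in the class, the multiple
must be `0`, and the class of `n` is then what is left over. -/
lemma class_sum_eq_zero (hS : ∀ a ∈ S, Differentiable ℂ a) (hdS : ∀ a ∈ S, deriv a ∈ S)
    (hcS : ∀ c : ℂ, (fun _ => c) ∈ S) (hf : ∀ i, Differentiable ℂ (f i)) (I : Finset ι)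
    (hfS : ∀ i ∈ I, ∀ j ∈ I, (fun z => f i z - f j z) ∈ S) :
    ∀ (N : ℕ) (a : ι → ℂ → ℂ), (∀ i ∈ I, a i ∈ S) →
      (open Classical in (I.filter fun i => a i ≠ 0).card ≤ N) →
      (∀ z, ∑ i ∈ I, a i z * exp (f i z) = 0) →
      ∀ j ∈ I, ∀ z, (open Classical in
        ∑ i ∈ I.filter (fun i => ExpRel S f i j), a i z * exp (f i z)) = 0 := by
  classical
  intro N
  induction N with
  | zero =>
    intro a ha hN _ j _ z
    refine Finset.sum_eq_zero fun i hi => ?_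
    have : i ∉ I.filter fun i => a i ≠ 0 := by
      rw [Finset.card_eq_zero.1 (Nat.le_zero.1 hN)]; simp
    have : a i = 0 := by
      by_contra h0
      exact this (Finset.mem_filter.2 ⟨(Finset.mem_filter.1 hi).1, h0⟩)
    simp [this]
  | succ N ih =>
    intro a ha hN hsum j hj
    by_cases hall : ∀ i ∈ I, a i = 0
    · intro z
      refine Finset.sum_eq_zero fun i hi => ?_
      simp [hall i (Finset.mem_filter.1 hi).1]
    push Not at hall
    obtain ⟨n, hn, hn0⟩ := hall
    -- `b i * exp (f i) * exp (f n)` is the Wronskian of `a n * exp (f n)` and `a i * exp (f i)`;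
    -- only differences of the exponents are known to lie in `S`, and only these occur in `b i`.
    let b : ι → ℂ → ℂ := fun i => a n * deriv (a i) - a i * deriv (a n)
      + a n * a i * deriv (fun z => f i z - f n z)
    have hb : ∀ i ∈ I, b i ∈ S := fun i hi =>
      S.add_mem (S.sub_mem (S.mul_mem (ha n hn) (hdS _ (ha i hi)))
        (S.mul_mem (ha i hi) (hdS _ (ha n hn))))
        (S.mul_mem (S.mul_mem (ha n hn) (ha i hi)) (hdS _ (hfS i hi n hn)))
    have hda : ∀ i ∈ I, ∀ z, HasDerivAt (a i) (deriv (a i) z) z := fun i hi z =>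
      (hS _ (ha i hi) z).hasDerivAt
    have hdf : ∀ i z, HasDerivAt (f i) (deriv (f i) z) z := fun i z => (hf i z).hasDerivAt
    have hterm : ∀ i ∈ I, ∀ z, HasDerivAt (fun z => a i z * exp (f i z))
        ((deriv (a i) z + a i z * deriv (f i) z) * exp (f i z)) z := by
      intro i hi z
      exact ((hda i hi z).mul ((hdf i z).cexp)).congr_deriv (by ring)
    have hbz : ∀ i z, b i z = a n z * (deriv (a i) z + a i z * deriv (f i) z)
        - a i z * (deriv (a n) z + a n z * deriv (f n) z) := by
      intro i z
      have : deriv (fun z => f i z - f n z) z = deriv (f i) z - deriv (f n) z :=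
        ((hdf i z).sub (hdf n z)).deriv
      simp only [b, Pi.add_apply, Pi.sub_apply, Pi.mul_apply, this]
      ring
    have hA : ∀ C ⊆ I, ∀ z, HasDerivAt (fun z => ∑ i ∈ C, a i z * exp (f i z))
        (∑ i ∈ C, (deriv (a i) z + a i z * deriv (f i) z) * exp (f i z)) z :=
      fun C hC z => HasDerivAt.fun_sum fun i hi => hterm i (hC hi) z
    have hbsum : ∀ C : Finset ι, ∀ z, ∑ i ∈ C, b i z * exp (f i z)
        = a n z * (∑ i ∈ C, (deriv (a i) z + a i z * deriv (f i) z) * exp (f i z))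
          - (deriv (a n) z + a n z * deriv (f n) z) * ∑ i ∈ C, a i z * exp (f i z) := by
      intro C z
      rw [Finset.mul_sum, Finset.mul_sum, ← Finset.sum_sub_distrib]
      refine Finset.sum_congr rfl fun i _ => ?_
      rw [hbz]; ring
    have hb0 : ∀ z, ∑ i ∈ I, b i z * exp (f i z) = 0 := by
      intro z
      have h1 : (∑ i ∈ I, (deriv (a i) z + a i z * deriv (f i) z) * exp (f i z)) = 0 := by
        have := (hA I subset_rfl z).deriv
        rw [← this, show (fun z => ∑ i ∈ I, a i z * exp (f i z)) = fun _ => 0 from funext hsum]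
        simp
      rw [hbsum, h1, hsum z]; ring
    have hcard : (I.filter fun i => b i ≠ 0).card ≤ N := by
      have hsub : (I.filter fun i => b i ≠ 0) ⊆ (I.filter fun i => a i ≠ 0).erase n := by
        intro i hi
        obtain ⟨hiI, hbi⟩ := Finset.mem_filter.1 hi
        refine Finset.mem_erase.2 ⟨?_, Finset.mem_filter.2 ⟨hiI, ?_⟩⟩
        · rintro rfl
          exact hbi (funext fun z => by rw [hbz]; simp)
        · intro h0
          refine hbi (funext fun z => ?_)
          rw [hbz]
          simp [h0]
      have := Finset.card_le_card hsub
      rw [Finset.card_erase_of_mem (Finset.mem_filter.2 ⟨hn, hn0⟩)] at this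
      omega
    have hcls := ih b hb hcard hb0
    -- The sum over a class is a constant multiple of `a n * exp (f n)`.
    have hconst : ∀ k ∈ I, ∃ γ : ℂ, ∀ z,
        ∑ i ∈ I.filter (fun i => ExpRel S f i k), a i z * exp (f i z)
          = γ * (a n z * exp (f n z)) := by
      intro k hk
      set C := I.filter (fun i => ExpRel S f i k)
      set A : ℂ → ℂ := fun z => ∑ i ∈ C, a i z * exp (f i z) with hAdef
      set H : ℂ → ℂ := fun z => a n z * exp (f n z) with hHdef
      have hHd : ∀ z, HasDerivAt H _ z := hterm n hn
      have hAd : ∀ z, HasDerivAt A _ z := hA C (Finset.filter_subset _ _)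
      obtain ⟨z₀, hz₀⟩ : ∃ z, a n z ≠ 0 := by
        by_contra! h; exact hn0 (funext h)
      have hW : ∀ z, H z * deriv A z - deriv H z * A z = 0 := by
        intro z
        have := hcls k hk z
        rw [hbsum] at this
        rw [(hHd z).deriv, (hAd z).deriv]
        simp only [hHdef, hAdef]
        linear_combination exp (f n z) * this
      have hHne : ∀ᶠ z in nhds z₀, H z ≠ 0 :=
        (hHd z₀).continuousAt.eventually_ne (by simp [hHdef, hz₀])
      refine ⟨A z₀ / H z₀, ?_⟩
      have hq : ∀ᶠ z in nhds z₀, A z = (A z₀ / H z₀) * H z := by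
        obtain ⟨ε, hε, hball⟩ := Metric.eventually_nhds_iff_ball.1 hHne
        filter_upwards [Metric.ball_mem_nhds z₀ hε] with z hz
        have hc := Metric.isOpen_ball.is_const_of_deriv_eq_zero
          (convex_ball z₀ ε).isPreconnected (f := fun z => A z / H z)
          (fun w hw => ((hAd w).div (hHd w) (hball w hw)).differentiableAt.differentiableWithinAt)
          (fun w hw => by
            have h1 : HasDerivAt A (deriv A w) w := (hAd w).differentiableAt.hasDerivAt
            have h2 : HasDerivAt H (deriv H w) w := (hHd w).differentiableAt.hasDerivAt
            have := (h1.div h2 (hball w hw)).deriv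
            rw [show (fun z => A z / H z) = A / H from rfl, this]
            have h3 := hW w
            simp only [Pi.zero_apply, div_eq_zero_iff]
            left
            linear_combination h3)
          hz (Metric.mem_ball_self hε)
        have hHz := hball z hz
        rw [← hc]
        field_simp
      have hAa : AnalyticOnNhd ℂ A Set.univ := fun z _ =>
        Differentiable.analyticAt (fun w => (hAd w).differentiableAt) z
      have hHa : AnalyticOnNhd ℂ (fun z => (A z₀ / H z₀) * H z) Set.univ := fun z _ =>
        Differentiable.analyticAt
          (fun w => ((hHd w).differentiableAt.const_mul (A z₀ / H z₀))) z
      exact congrFun (hAa.eq_of_eventuallyEq hHa hq)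
    -- A nonzero class sum proportional to `a n * exp (f n)` forces `n` into that class.
    have hother : ∀ k ∈ I, ¬ ExpRel S f n k → ∀ z,
        ∑ i ∈ I.filter (fun i => ExpRel S f i k), a i z * exp (f i z) = 0 := by
      intro k hk hnk
      obtain ⟨γ, hγ⟩ := hconst k hk
      by_cases hγ0 : γ = 0
      · intro z; rw [hγ]; simp [hγ0]
      exfalso
      obtain ⟨d, hd, e, he, hd0, hde⟩ := exists_sum_eq (f := f) hS a k
        (I.filter (fun i => ExpRel S f i k)) (fun i hi => ha i (Finset.mem_filter.1 hi).1)
        (fun i hi => (Finset.mem_filter.1 hi).2)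
      have hdan : d * a n ≠ 0 := fun H =>
        (entire_mul_eq_zero (hS _ hd) (hS _ (ha n hn)) H).elim hd0 hn0
      have hrel : ∀ z, γ * ((d * a n) z * exp (f n z)) = e z * exp (f k z) := by
        intro z
        rw [← hde, hγ]; simp only [Pi.mul_apply]; ring
      refine hnk ⟨(fun _ => γ) * (d * a n), S.mul_mem (hcS γ) (S.mul_mem hd (ha n hn)), e, he,
        fun H => ?_, fun H => ?_, fun z => ?_⟩
      · refine hdan (funext fun z => ?_)
        have := congrFun H z
        simpa [hγ0] using this
      · refine hdan (funext fun z => ?_)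
        have := hrel z
        simpa [hγ0, H, exp_ne_zero] using this
      · rw [← hrel]
        simp only [Pi.mul_apply]; ring
    by_cases hnj : ExpRel S f n j
    · intro z
      let R : Setoid ι := ⟨ExpRel S f, ExpRel.refl, ExpRel.symm, ExpRel.trans hS⟩
      have hcompl : ∑ i ∈ I.filter (fun i => ¬ ExpRel S f i j), a i z * exp (f i z) = 0 := by
        refine Finset.sum_cancels_of_partition_cancels R fun k hk => ?_
        obtain ⟨hkI, hkj⟩ := Finset.mem_filter.1 hk
        have hset : ((I.filter fun i => ¬ ExpRel S f i j).filter fun i => R i k)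
            = I.filter fun i => ExpRel S f i k := by
          ext i
          simp only [Finset.mem_filter]
          constructor
          · exact fun h => ⟨h.1.1, h.2⟩
          · exact fun h => ⟨⟨h.1, fun h' => hkj ((ExpRel.symm h.2).trans hS h')⟩, h.2⟩
        rw [hset]
        exact hother k hkI (fun h => hkj (h.symm.trans hS hnj)) z
      have := Finset.sum_filter_add_sum_filter_not I (fun i => ExpRel S f i j)
        (fun i => a i z * exp (f i z))
      rw [hcompl, hsum z, add_zero] at this
      exact this
    · exact hother j hj hnj
end Alg

/-! ### Growth -/

/-- An unbounded monotone `v` cannot exceed the exponential of its slightly earlier values up to a factor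
polynomial in the step. Starting at `r₀` with `v r₀ ≥ A` large and taking steps `δ = 2 ^ (-n) / 4`, the
radii stay below `2 * r₀`, while `v ≥ A + 3 * n` at the `n`-th radius propagates because
`exp (3 * n) ≥ 16 ^ n` outweighs the loss `8 ^ n` from `δ ^ 3`. So `v` would be infinite at `2 * r₀`. -/
lemma growth_contradiction (v : ℝ → ℝ) (hv : Monotone v)
    (htop : Filter.Tendsto v Filter.atTop Filter.atTop)
    (K : ℝ) (hK : 0 < K)
    (h : ∀ r, 1 ≤ r → ∀ δ, 0 < δ → δ ≤ 1 → δ ^ 3 * Real.exp (v r) ≤ K * v (r * (1 + δ))) :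
    False := by
  obtain ⟨A, hA0, hA⟩ : ∃ A : ℝ, 0 ≤ A ∧ 64 * K * (A + 3) ≤ Real.exp A := by
    have h1 := (Real.tendsto_exp_div_pow_atTop 1).eventually_ge_atTop (64 * K * 4)
    obtain ⟨A, hA, hA1⟩ := (h1.and (Filter.eventually_ge_atTop 1)).exists
    refine ⟨A, by linarith, ?_⟩
    rw [pow_one, le_div_iff₀ (by linarith)] at hA
    refine le_trans ?_ hA
    have : A + 3 ≤ 4 * A := by linarith
    nlinarith
  obtain ⟨r₀, hr₀, hr₁⟩ := ((htop.eventually_ge_atTop A).and (Filter.eventually_ge_atTop 1)).exists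
  have key : ∀ n : ℕ, A + 3 * n ≤ v (r₀ * (2 - (1 / 2) ^ n)) := by
    intro n
    induction n with
    | zero => norm_num; exact hr₀
    | succ n ih =>
      set q : ℝ := (1 / 2) ^ n with hq
      have hq0 : 0 < q := by positivity
      have hq1 : q ≤ 1 := pow_le_one₀ (by norm_num) (by norm_num)
      have hr : 1 ≤ r₀ * (2 - q) := by nlinarith
      have h1 := h _ hr (q / 4) (by linarith) (by linarith)
      have h2 : v (r₀ * (2 - q) * (1 + q / 4)) ≤ v (r₀ * (2 - (1 / 2) ^ (n + 1))) := by
        apply hv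
        rw [pow_succ, ← hq, mul_assoc]
        apply mul_le_mul_of_nonneg_left _ (by linarith)
        nlinarith
      have h3 : Real.exp A * (16 : ℝ) ^ n ≤ Real.exp (v (r₀ * (2 - q))) := by
        have h16 : (16 : ℝ) ≤ Real.exp 3 := by
          have := Real.exp_one_gt_d9
          have h : Real.exp 3 = Real.exp 1 ^ 3 := by rw [← Real.exp_nat_mul]; norm_num
          rw [h]
          have h2 : (2.7:ℝ) ^ 3 ≤ Real.exp 1 ^ 3 := by gcongr; linarith
          norm_num at h2 ⊢
          linarith
        calc Real.exp A * (16 : ℝ) ^ n ≤ Real.exp A * Real.exp 3 ^ n := by gcongr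
          _ = Real.exp (A + 3 * n) := by rw [Real.exp_add, ← Real.exp_nat_mul]; ring_nf
          _ ≤ _ := Real.exp_le_exp.2 ih
      have h4 : (2 : ℝ) ^ n * q = 1 := by rw [hq, ← mul_pow]; norm_num
      have h5 : (16 : ℝ) ^ n = 2 ^ n * 2 ^ n * 2 ^ n * 2 ^ n := by
        rw [← mul_pow, ← mul_pow, ← mul_pow]; norm_num
      have h6 : (q / 4) ^ 3 * (Real.exp A * 16 ^ n) = Real.exp A * 2 ^ n / 64 := by
        rw [h5]
        have : (q / 4) ^ 3 * (Real.exp A * (2 ^ n * 2 ^ n * 2 ^ n * 2 ^ n))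
          = ((2 : ℝ) ^ n * q) ^ 3 * (Real.exp A * 2 ^ n / 64) := by ring
        rw [this, h4]; ring
      have h7 : Real.exp A * 2 ^ n / 64 ≤ K * v (r₀ * (2 - (1 / 2) ^ (n + 1))) := by
        rw [← h6]
        calc _ ≤ (q / 4) ^ 3 * Real.exp (v (r₀ * (2 - q))) := by gcongr
          _ ≤ _ := h1
          _ ≤ _ := by gcongr
      have h8 : (n : ℝ) + 1 ≤ 2 ^ n := by
        have := Nat.lt_two_pow_self (n := n)
        exact_mod_cast this
      have h9 : K * (A + 3 * ((n : ℝ) + 1)) ≤ Real.exp A * 2 ^ n / 64 := by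
        have : 64 * K * (A + 3) * (n + 1) ≤ Real.exp A * 2 ^ n :=
          mul_le_mul hA h8 (by positivity) (by positivity)
        have h10 : K * (A + 3 * ((n : ℝ) + 1)) ≤ K * ((A + 3) * (n + 1)) := by
          gcongr
          nlinarith [Nat.cast_nonneg (α := ℝ) n]
        nlinarith
      push_cast
      exact le_of_mul_le_mul_left (h9.trans h7) hK
  obtain ⟨n, hn⟩ := exists_nat_gt (v (r₀ * 2))
  have h1 := key n
  have h2 : v (r₀ * (2 - (1 / 2) ^ n)) ≤ v (r₀ * 2) := by
    apply hv
    apply mul_le_mul_of_nonneg_left _ (by linarith)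
    have : (0:ℝ) < (1 / 2) ^ n := by positivity
    linarith
  have : (0:ℝ) ≤ n := Nat.cast_nonneg n
  linarith

/-- The yardstick for functions that are small with respect to `M`: allowing a factor `1 + δ` in the
radius and a factor `1 / δ` makes powers of it stable under differentiation by Cauchy's estimate.
The summand `2` keeps it at least `2` for `δ ≤ 1`. -/
noncomputable def sizeBase (M : ℝ → ℝ) (r δ : ℝ) : ℝ := (2 + M (r * (1 + δ))) / δ

lemma two_le_sizeBase {M : ℝ → ℝ} (hM : ∀ r, 0 ≤ M r) {r δ : ℝ} (hδ : 0 < δ) (hδ1 : δ ≤ 1) :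
    2 ≤ sizeBase M r δ := by
  rw [sizeBase, le_div_iff₀ hδ]
  nlinarith [hM (r * (1 + δ))]

/-- `a` is entire and its growth is polynomial in that of `M`. Keeping all `δ ∈ (0, 1]` in the
definition avoids exceptional sets of radii. -/
def IsSmall (M : ℝ → ℝ) (a : ℂ → ℂ) : Prop :=
  Differentiable ℂ a ∧ ∃ k : ℕ, ∀ r, 1 ≤ r → ∀ δ, 0 < δ → δ ≤ 1 → ∀ z : ℂ, ‖z‖ ≤ r →
    ‖a z‖ ≤ sizeBase M r δ ^ k

/-- The ring of entire functions of growth polynomial in that of `M`. -/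
def smallRing (M : ℝ → ℝ) (hM : ∀ r, 0 ≤ M r) : Subring (ℂ → ℂ) where
  carrier := {a | IsSmall M a}
  zero_mem' := ⟨differentiable_const 0, 0, by simp⟩
  one_mem' := ⟨differentiable_const 1, 0, by simp⟩
  mul_mem' := by
    rintro a b ⟨ha, k, hk⟩ ⟨hb, l, hl⟩
    refine ⟨ha.mul hb, k + l, fun r hr δ hδ hδ1 z hz => ?_⟩
    rw [Pi.mul_apply, norm_mul, pow_add]
    have := two_le_sizeBase hM (r := r) hδ hδ1
    gcongr
    exacts [hk r hr δ hδ hδ1 z hz, hl r hr δ hδ hδ1 z hz]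
  add_mem' := by
    rintro a b ⟨ha, k, hk⟩ ⟨hb, l, hl⟩
    refine ⟨ha.add hb, max k l + 1, fun r hr δ hδ hδ1 z hz => ?_⟩
    have h2 := two_le_sizeBase hM (r := r) hδ hδ1
    have h1 : 1 ≤ sizeBase M r δ := by linarith
    calc ‖a z + b z‖ ≤ ‖a z‖ + ‖b z‖ := norm_add_le _ _
      _ ≤ sizeBase M r δ ^ max k l + sizeBase M r δ ^ max k l := by
        gcongr
        · exact (hk r hr δ hδ hδ1 z hz).trans (pow_le_pow_right₀ h1 (le_max_left _ _))
        · exact (hl r hr δ hδ hδ1 z hz).trans (pow_le_pow_right₀ h1 (le_max_right _ _))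
      _ = sizeBase M r δ ^ max k l * 2 := by ring
      _ ≤ sizeBase M r δ ^ max k l * sizeBase M r δ := by gcongr
      _ = _ := (pow_succ _ _).symm
  neg_mem' := by
    rintro a ⟨ha, k, hk⟩
    exact ⟨ha.neg, k, by simpa using hk⟩

lemma const_mem_smallRing {M : ℝ → ℝ} {hM : ∀ r, 0 ≤ M r} (c : ℂ) :
    (fun _ => c) ∈ smallRing M hM := by
  obtain ⟨k, hk⟩ := pow_unbounded_of_one_lt ‖c‖ one_lt_two
  refine ⟨differentiable_const c, k, fun r hr δ hδ hδ1 z hz => hk.le.trans ?_⟩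
  have := two_le_sizeBase hM (r := r) hδ hδ1
  gcongr

/-- Two consecutive steps of relative size `δ / 3` stay within one step of size `δ`. -/
lemma sizeBase_third {M : ℝ → ℝ} (hmono : Monotone M) {r δ : ℝ} (hr : 1 ≤ r)
    (hδ : 0 < δ) (hδ1 : δ ≤ 1) : sizeBase M (r * (1 + δ / 3)) (δ / 3) ≤ 3 * sizeBase M r δ := by
  have h : M (r * (1 + δ / 3) * (1 + δ / 3)) ≤ M (r * (1 + δ)) := by
    apply hmono
    rw [mul_assoc]
    apply mul_le_mul_of_nonneg_left _ (by linarith)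
    nlinarith
  calc _ = 3 * ((2 + M (r * (1 + δ / 3) * (1 + δ / 3))) / δ) := by rw [sizeBase]; ring
    _ ≤ 3 * sizeBase M r δ := by rw [sizeBase]; gcongr

lemma deriv_mem_smallRing {M : ℝ → ℝ} {hM : ∀ r, 0 ≤ M r} (hmono : Monotone M) {a : ℂ → ℂ}
    (ha : a ∈ smallRing M hM) : deriv a ∈ smallRing M hM := by
  obtain ⟨hd, k, hk⟩ := ha
  refine ⟨hd.deriv, 3 * k + 2, fun r hr δ hδ hδ1 z hz => ?_⟩
  have h2 := two_le_sizeBase hM (r := r) hδ hδ1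
  have h3 := sizeBase_third hmono hr hδ hδ1
  have h0 := two_le_sizeBase hM (r := r * (1 + δ / 3)) (δ := δ / 3) (by linarith) (by linarith)
  set B := sizeBase M r δ with hB
  have hBδ : 3 / δ ≤ B ^ 2 := by
    have : 2 / δ ≤ B := by rw [hB, sizeBase]; gcongr; linarith [hM (r * (1 + δ))]
    have h4 : 3 / δ ≤ 2 * (2 / δ) := by field_simp; norm_num
    nlinarith
  have hc : ‖deriv a z‖ ≤ (3 * B) ^ k / (δ / 3) := by
    refine norm_deriv_le_of_forall_mem_sphere_norm_le (by linarith) hd.diffContOnCl fun w hw => ?_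
    refine (hk (r * (1 + δ / 3)) (by nlinarith) (δ / 3) (by linarith) (by linarith) w ?_).trans ?_
    · have : ‖w - z‖ = δ / 3 := by simpa [dist_eq_norm] using hw
      have h5 : ‖w‖ ≤ ‖w - z‖ + ‖z‖ := by simpa using norm_add_le (w - z) z
      nlinarith
    · gcongr
  calc ‖deriv a z‖ ≤ (3 * B) ^ k / (δ / 3) := hc
    _ = (3 * B) ^ k * (3 / δ) := by field_simp
    _ ≤ (B ^ 3) ^ k * B ^ 2 := by
      gcongr
      nlinarith [mul_self_nonneg (B - 2)]
    _ = _ := by ring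

/-! ### Bounds from Nevanlinna theory and Poisson's formula -/

lemma characteristic_entire {a : ℂ → ℂ} (ha : Differentiable ℂ a) (r : ℝ) :
    characteristic a ⊤ r = Real.circleAverage (fun z => Real.posLog ‖a z‖) 0 r := by
  have hA : AnalyticOnNhd ℂ a Set.univ := fun z _ => ha.analyticAt z
  have : logCounting a ⊤ = 0 := by
    rw [logCounting_top]
    have h := MeromorphicOn.AnalyticOnNhd.divisor_nonneg hA
    rw [negPart_eq_zero.2 h, map_zero]
  simp [characteristic, this, proximity_top]

lemma circleIntegrable_of_continuous {E : Type*} [NormedAddCommGroup E] {φ : ℂ → E}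
    (h : Continuous φ) (R : ℝ) : CircleIntegrable φ 0 R :=
  (h.comp (continuous_circleMap 0 R)).intervalIntegrable _ _

/-- If `exp g = b / a`, the mean of the positive part of `re g` is the Nevanlinna characteristic
`T (b / a) ≤ T a + T b + O(1)`, by the First Main Theorem. The constant `C` does not depend on the
radius. -/
lemma exists_circleAverage_le {a b g : ℂ → ℂ} (ha : Differentiable ℂ a) (hb : Differentiable ℂ b)
    (hg : Differentiable ℂ g) (ha0 : a ≠ 0) (hb0 : b ≠ 0) (h : ∀ z, a z * exp (g z) = b z) :
    ∃ C : ℝ, 0 ≤ C ∧ ∀ R, 1 ≤ R → ∀ T, 0 ≤ T → (∀ z, ‖z‖ = R → ‖a z‖ ≤ Real.exp T) →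
      (∀ z, ‖z‖ = R → ‖b z‖ ≤ Real.exp T) →
      Real.circleAverage (fun z => max (g z).re 0) 0 R ≤ 2 * T + C := by
  have hne : ∀ {c : ℂ → ℂ}, Differentiable ℂ c → c ≠ 0 →
      Meromorphic c ∧ (∀ z, meromorphicOrderAt c z ≠ ⊤) ∧ c⁻¹ * c =ᶠ[Filter.codiscrete ℂ] 1 := by
    intro c hc hc0
    have hA : AnalyticOnNhd ℂ c Set.univ := fun z _ => hc.analyticAt z
    refine ⟨fun z => (hc.analyticAt z).meromorphicAt, fun z hz => ?_, ?_⟩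
    · rw [meromorphicOrderAt_eq_top_iff] at hz
      exact hc0 (hA.eq_of_frequently_eq (g := 0) (fun z _ => analyticAt_const) (hz.frequently))
    · have : ∀ᶠ z in Filter.codiscrete ℂ, c z ≠ 0 := by
        obtain ⟨x, hx⟩ : ∃ x, c x ≠ 0 := by
          by_contra! h0; exact hc0 (funext h0)
        exact hA.preimage_zero_mem_codiscrete hx
      filter_upwards [this] with z hz
      simp [hz]
  obtain ⟨ham, hao, hac⟩ := hne ha ha0
  obtain ⟨hbm, hbo, -⟩ := hne hb hb0
  refine ⟨max |Real.log ‖a 0‖| |Real.log ‖meromorphicTrailingCoeffAt a 0‖|,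
    le_max_of_le_left (abs_nonneg _), fun R hR T hT hTa hTb => ?_⟩
  have hR0 : R ≠ 0 := by linarith
  have hbound : ∀ {c : ℂ → ℂ}, Differentiable ℂ c → (∀ z, ‖z‖ = R → ‖c z‖ ≤ Real.exp T) →
      characteristic c ⊤ R ≤ T := by
    intro c hc hcT
    rw [characteristic_entire hc]
    refine Real.circleAverage_mono_on_of_le_circle
      (circleIntegrable_of_continuous (Real.continuous_posLog.comp hc.continuous.norm) R) fun z hz => ?_
    have hz' : ‖z‖ = R := by simpa [abs_of_pos (by linarith : 0 < R)] using hz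
    rw [Real.posLog_def]
    refine max_le hT ?_
    rcases eq_or_ne (c z) 0 with h0 | h0
    · simp [h0, hT]
    · exact (Real.log_le_iff_le_exp (by simpa using h0)).2 (hcT z hz')
  have hexp : Differentiable ℂ (fun z => exp (g z)) := hg.cexp
  have h1 : Real.circleAverage (fun z => max (g z).re 0) 0 R
      = characteristic (fun z => exp (g z)) ⊤ R := by
    rw [characteristic_entire hexp]
    congr 1
    funext z
    show max (g z).re 0 = max 0 (Real.log ‖exp (g z)‖)
    rw [norm_exp, Real.log_exp, max_comm]
  have h2 : characteristic (fun z => exp (g z)) ⊤ R = characteristic (a⁻¹ * b) ⊤ R := by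
    refine characteristic_congr_codiscrete ?_ hR0
    filter_upwards [hac] with z hz
    have hz' : (a z)⁻¹ * a z = 1 := hz
    rw [Pi.mul_apply, Pi.inv_apply, ← h z, ← mul_assoc, hz', one_mul]
  have h3 := characteristic_mul_top_le hR ham.inv (fun z => by
    rw [meromorphicOrderAt_inv]; simpa using hao z) hbm hbo
  have h4 := (abs_le.1 (characteristic_sub_characteristic_inv_le ham (R := R))).1
  have h5 := hbound ha hTa
  have h6 := hbound hb hTb
  rw [h1, h2]
  simp only [Pi.add_apply] at h3
  linarith

/-- A bound for the mean of the positive part of `re g` bounds `g` itself on a smaller disc: Poisson's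
formula on the circle of radius `r * (1 + δ / 3)` bounds `re g` from above on the disc of radius
`r * (1 + δ / 6)`, and the Borel–Carathéodory theorem passes from there to `‖g‖` on radius `r`. -/
lemma norm_le_of_circleAverage_le {g : ℂ → ℂ} (hg : Differentiable ℂ g) {D r δ : ℝ} (hr : 1 ≤ r)
    (hδ : 0 < δ) (hδ1 : δ ≤ 1) (hD : 0 < D)
    (h : Real.circleAverage (fun z => max (g z).re 0) 0 (r * (1 + δ / 3)) ≤ D) {z : ℂ}
    (hz : ‖z‖ ≤ r) : ‖g z‖ ≤ (288 * D + 36 * ‖g 0‖) / δ ^ 2 := by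
  set ρ := r * (1 + δ / 6) with hρ
  set R := r * (1 + δ / 3) with hR
  have hρ0 : 0 < ρ := by positivity
  have hR0 : 0 < R := by positivity
  have hgap : R - ρ = r * δ / 6 := by rw [hρ, hR]; ring
  have hgap' : ρ - r = r * δ / 6 := by rw [hρ]; ring
  have hrδ : 0 < r * δ := by positivity
  have hre : ∀ w ∈ Metric.ball (0 : ℂ) ρ, (g w).re ≤ 24 * D / δ := by
    intro w hw
    have hw' : ‖w‖ < ρ := by simpa using hw
    have hwR : w ∈ Metric.ball (0 : ℂ) R := by simp; linarith
    have hmax : CircleIntegrable (fun z => max (g z).re 0) 0 R := by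
      refine circleIntegrable_of_continuous ?_ R
      have := hg.continuous
      fun_prop
    have hP := (hg.diffContOnCl (s := Metric.ball 0 R)).circleAverage_re_herglotzRieszKernel_smul hwR
    have hker := continuousOn_herglotzRieszKernel_sphere hwR
    have hci : CircleIntegrable ((re ∘ herglotzRieszKernel 0 w) • g) 0 R :=
      ContinuousOn.circleIntegrable' (((continuous_re.comp_continuousOn hker)).smul hg.continuous.continuousOn)
    have hci' : CircleIntegrable (fun z => (herglotzRieszKernel 0 w z).re * (g z).re) 0 R :=
      ContinuousOn.circleIntegrable' (((continuous_re.comp_continuousOn hker)).mul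
        (continuous_re.comp hg.continuous).continuousOn)
    have hPre : (g w).re = Real.circleAverage (fun z => (herglotzRieszKernel 0 w z).re * (g z).re) 0 R := by
      have hfun : (fun z => (herglotzRieszKernel 0 w z).re * (g z).re)
          = reCLM ∘ ((re ∘ herglotzRieszKernel 0 w) • g) := by
        funext z; simp
      rw [← hP, hfun]
      exact (ContinuousLinearMap.circleAverage_comp_comm reCLM hci).symm
    rw [hPre]
    have hK : ∀ z ∈ Metric.sphere (0:ℂ) R, 0 ≤ (herglotzRieszKernel 0 w z).re ∧
        (herglotzRieszKernel 0 w z).re ≤ 24 / δ := by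
      intro z hz
      have h1 := re_herglotzRieszKernel_le hz hwR
      have h2 := le_re_herglotzRieszKernel hz hwR
      rw [← herglotzRieszKernel_def] at h1 h2
      have hn := norm_nonneg w
      simp only [sub_zero] at h1 h2
      refine ⟨le_trans (div_nonneg (by linarith) (by linarith)) h2, h1.trans ?_⟩
      rw [div_le_div_iff₀ (by linarith) hδ]
      have : R ≤ 2 * r := by rw [hR]; nlinarith
      nlinarith
    calc _ ≤ Real.circleAverage (fun z => (24 / δ) * max (g z).re 0) 0 R := by
          refine Real.circleAverage_mono hci' (hmax.const_mul _) fun z hz => ?_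
          rw [abs_of_pos hR0] at hz
          obtain ⟨k0, k1⟩ := hK z hz
          calc _ ≤ (herglotzRieszKernel 0 w z).re * max (g z).re 0 :=
                mul_le_mul_of_nonneg_left (le_max_left _ _) k0
            _ ≤ _ := mul_le_mul_of_nonneg_right k1 (le_max_right _ _)
      _ = (24 / δ) * Real.circleAverage (fun z => max (g z).re 0) 0 R := by
          have := Real.circleAverage_fun_smul (a := 24 / δ) (f := fun z => max (g z).re 0) (c := (0:ℂ)) (R := R)
          simpa [smul_eq_mul] using this
      _ ≤ (24 / δ) * D := by gcongr
      _ = _ := by ring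
  have hBC := borelCaratheodory (M := 24 * D / δ) (by positivity) hg.differentiableOn
    (fun w hw => hre w hw) hρ0 (z := z) (by simp; linarith)
  have hρz : r * δ / 6 ≤ ρ - ‖z‖ := by linarith
  have hn := norm_nonneg z
  calc ‖g z‖ ≤ _ := hBC
    _ ≤ 2 * (24 * D / δ) * r / (r * δ / 6) + ‖g 0‖ * (3 * r) / (r * δ / 6) := by
      have : ρ + ‖z‖ ≤ 3 * r := by rw [hρ]; nlinarith
      gcongr
    _ = 288 * D / δ ^ 2 + 18 * ‖g 0‖ / δ := by field_simp; ring
    _ ≤ 288 * D / δ ^ 2 + 36 * ‖g 0‖ / δ ^ 2 := by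
      gcongr
      · norm_num
      · nlinarith
    _ = _ := by ring

/-- If `exp g` is a quotient of functions of growth polynomial in `M`, then `g` is
bounded by a multiple of `log M` at a slightly larger radius, with polynomial cost in `1 / δ`. -/
lemma norm_le_of_ratio {M : ℝ → ℝ} {hM : ∀ r, 0 ≤ M r} (hmono : Monotone M) {a b g : ℂ → ℂ}
    (ha : a ∈ smallRing M hM) (hb : b ∈ smallRing M hM) (hg : Differentiable ℂ g) (ha0 : a ≠ 0)
    (hb0 : b ≠ 0) (h : ∀ z, a z * exp (g z) = b z) :
    ∃ K : ℝ, 0 ≤ K ∧ ∀ r, 1 ≤ r → ∀ δ, 0 < δ → δ ≤ 1 → ∀ z, ‖z‖ ≤ r →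
      ‖g z‖ ≤ K / δ ^ 3 * (1 + Real.log (2 + M (r * (1 + δ)))) := by
  obtain ⟨had, k, hk⟩ := ha
  obtain ⟨hbd, l, hl⟩ := hb
  obtain ⟨C, hC0, hC⟩ := exists_circleAverage_le had hbd hg ha0 hb0 h
  set N : ℕ := max k l
  refine ⟨288 * (6 * N + C + 1) + 36 * ‖g 0‖, by positivity, fun r hr δ hδ hδ1 z hz => ?_⟩
  have h2 := two_le_sizeBase hM (r := r) hδ hδ1
  have h3 := sizeBase_third hmono hr hδ hδ1
  have hR : 1 ≤ r * (1 + δ / 3) := by nlinarith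
  have h0 := two_le_sizeBase hM (r := r * (1 + δ / 3)) (δ := δ / 3) (by linarith) (by linarith)
  set B := sizeBase M r δ with hB
  set L := 1 + Real.log (2 + M (r * (1 + δ))) with hL
  have hMp := hM (r * (1 + δ))
  have hL1 : 1 ≤ L := by
    have := Real.log_nonneg (x := 2 + M (r * (1 + δ))) (by linarith)
    linarith
  have hδinv : 1 ≤ 1 / δ := by rw [le_div_iff₀ hδ]; linarith
  have hlogB : Real.log (3 * B) ≤ 3 * (L / δ) := by
    rw [Real.log_mul (by norm_num) (by linarith), hB, sizeBase,
      Real.log_div (by linarith) hδ.ne']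
    have e1 : Real.log 3 ≤ 2 := by
      have := Real.log_le_sub_one_of_pos (x := 3) (by norm_num)
      linarith
    have e2 : -Real.log δ ≤ 1 / δ - 1 := by
      rw [← Real.log_inv, one_div]
      exact Real.log_le_sub_one_of_pos (inv_pos.2 hδ)
    have e3 : L ≤ L / δ := by rw [le_div_iff₀ hδ]; nlinarith
    have e4 : 1 / δ ≤ L / δ := by gcongr
    linarith
  have hlog0 : 0 ≤ Real.log (3 * B) := Real.log_nonneg (by linarith)
  have hbd' : ∀ j ≤ N, sizeBase M (r * (1 + δ / 3)) (δ / 3) ^ j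
      ≤ Real.exp (N * Real.log (3 * B)) := by
    intro j hj
    rw [Real.exp_nat_mul, Real.exp_log (by linarith)]
    calc _ ≤ (3 * B) ^ j := by gcongr
      _ ≤ _ := pow_le_pow_right₀ (by linarith) hj
  have hav := hC (r * (1 + δ / 3)) hR (N * Real.log (3 * B)) (by positivity)
    (fun w hw => (hk _ hR (δ / 3) (by linarith) (by linarith) w hw.le).trans
      (hbd' k (le_max_left _ _)))
    (fun w hw => (hl _ hR (δ / 3) (by linarith) (by linarith) w hw.le).trans
      (hbd' l (le_max_right _ _)))
  have hLδ : 1 ≤ L / δ := by rw [le_div_iff₀ hδ]; linarith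
  have hD : 2 * (N * Real.log (3 * B)) + C ≤ (6 * N + C + 1) * (L / δ) := by
    have : (N : ℝ) * Real.log (3 * B) ≤ N * (3 * (L / δ)) := by gcongr
    nlinarith
  refine (norm_le_of_circleAverage_le hg hr hδ hδ1 (by positivity) (hav.trans hD) hz).trans ?_
  rw [show (288 * (6 * (N : ℝ) + C + 1) + 36 * ‖g 0‖) / δ ^ 3 * L
    = (288 * ((6 * N + C + 1) * (L / δ)) + 36 * ‖g 0‖ * (L / δ)) / δ ^ 2 by field_simp]
  refine div_le_div_of_nonneg_right (add_le_add_right ?_ _) (by positivity)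
  exact le_mul_of_one_le_right (by positivity) hLδ

/-! ### Borel's lemma in one variable -/

section Borel
variable {ι : Type*}

/-- If `M` is unbounded and each `M r` is attained by `∑ ‖f i - f j‖` on `‖z‖ ≤ r`, the exponentials
cannot all be proportional over the ring of functions small with respect to `M`: every
difference, and therefore `M` itself, would be controlled by `log M` at a slightly larger radius. -/
lemma not_all_related {f : ι → ℂ → ℂ} (hf : ∀ i, Differentiable ℂ (f i)) (I : Finset ι)
    {M : ℝ → ℝ} {hM : ∀ r, 0 ≤ M r} (hmono : Monotone M)
    (hMatt : ∀ r, ∃ z : ℂ, ‖z‖ ≤ max r 0 ∧ M r = ∑ p ∈ I ×ˢ I, ‖f p.1 z - f p.2 z‖)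
    (htop : Filter.Tendsto M Filter.atTop Filter.atTop)
    (hrel : ∀ i ∈ I, ∀ j ∈ I, ExpRel (smallRing M hM) f i j) : False := by
  have hK : ∀ p : ι × ι, ∃ K : ℝ, 0 ≤ K ∧ (p ∈ I ×ˢ I → ∀ r, 1 ≤ r → ∀ δ, 0 < δ → δ ≤ 1 → ∀ z,
      ‖z‖ ≤ r → ‖f p.1 z - f p.2 z‖ ≤ K / δ ^ 3 * (1 + Real.log (2 + M (r * (1 + δ))))) := by
    intro p
    by_cases hp : p ∈ I ×ˢ I
    · obtain ⟨h1, h2⟩ := Finset.mem_product.1 hp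
      obtain ⟨a, ha, b, hb, ha0, hb0, hab⟩ := hrel _ h1 _ h2
      obtain ⟨K, hK0, hK⟩ := norm_le_of_ratio hmono ha hb
        ((hf p.1).sub (hf p.2)) ha0 hb0 (fun z => by
          rw [Pi.sub_apply, exp_sub, mul_div_assoc', hab, mul_div_cancel_right₀ _ (exp_ne_zero _)])
      exact ⟨K, hK0, fun _ => hK⟩
    · exact ⟨0, le_rfl, fun h => absurd h hp⟩
  choose K hK0 hK using hK
  set K₁ := ∑ p ∈ I ×ˢ I, K p with hK₁
  have hK₁0 : 0 ≤ K₁ := Finset.sum_nonneg fun p _ => hK0 p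
  have hlogmono : Monotone fun r => 1 + Real.log (2 + M r) := by
    intro r s hrs
    have := hmono hrs
    have := hM r
    show 1 + Real.log (2 + M r) ≤ 1 + Real.log (2 + M s)
    gcongr
  refine growth_contradiction (fun r => 1 + Real.log (2 + M r)) hlogmono ?_
    (Real.exp 1 * (K₁ + 2)) (by positivity) fun r hr δ hδ hδ1 => ?_
  · exact Filter.tendsto_atTop_add_const_left _ _
      (Real.tendsto_log_atTop.comp (Filter.tendsto_atTop_add_const_left _ _ htop))
  · obtain ⟨z, hz, hMz⟩ := hMatt r
    rw [max_eq_left (by linarith)] at hz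
    have hMr := hM r
    have hMp := hM (r * (1 + δ))
    set L := 1 + Real.log (2 + M (r * (1 + δ))) with hL
    have hL1 : 1 ≤ L := by
      have := Real.log_nonneg (x := 2 + M (r * (1 + δ))) (by linarith)
      linarith
    have h1 : M r ≤ K₁ / δ ^ 3 * L := by
      rw [hMz, hK₁, Finset.sum_div, Finset.sum_mul]
      exact Finset.sum_le_sum fun p hp => hK p hp r hr δ hδ hδ1 z hz
    have h2 : δ ^ 3 * M r ≤ K₁ * L := by
      have : δ ^ 3 * (K₁ / δ ^ 3 * L) = K₁ * L := by field_simp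
      rw [← this]; gcongr
    have h3 : δ ^ 3 ≤ 1 := pow_le_one₀ hδ.le hδ1
    rw [Real.exp_add, Real.exp_log (by linarith)]
    have : δ ^ 3 * (2 + M r) ≤ (K₁ + 2) * L := by nlinarith
    calc δ ^ 3 * (Real.exp 1 * (2 + M r)) = Real.exp 1 * (δ ^ 3 * (2 + M r)) := by ring
      _ ≤ Real.exp 1 * ((K₁ + 2) * L) := by gcongr
      _ = _ := by ring

/-- Borel's lemma in one variable: exponentials of entire functions, no two of which differ by a
constant, are linearly independent over `ℂ`. The induction is on a bound `N` for the number of terms;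
the relation splits over the classes, which are proper unless there is only one term. -/
theorem borel_lemma {f : ι → ℂ → ℂ} (hf : ∀ i, Differentiable ℂ (f i)) (c : ι → ℂ) :
    ∀ (N : ℕ) (I : Finset ι), I.card ≤ N →
      (∀ i ∈ I, ∀ j ∈ I, i ≠ j → ∃ z w, f i z - f j z ≠ f i w - f j w) →
      (∀ z, ∑ i ∈ I, c i * exp (f i z) = 0) → ∀ i ∈ I, c i = 0 := by
  classical
  intro N
  induction N with
  | zero =>
    intro I hI _ _ i hi
    rw [Finset.card_eq_zero.1 (Nat.le_zero.1 hI)] at hi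
    simp at hi
  | succ N ih =>
    intro I hI hne hsum j₀ hj₀
    let φ : ℂ → ℝ := fun z => ∑ p ∈ I ×ˢ I, ‖f p.1 z - f p.2 z‖
    have hφc : Continuous φ := continuous_finsetSum _ fun p _ =>
      ((hf p.1).continuous.sub (hf p.2).continuous).norm
    have hφ0 : ∀ z, 0 ≤ φ z := fun z => Finset.sum_nonneg fun _ _ => norm_nonneg _
    have hmax : ∀ r : ℝ, ∃ z : ℂ, ‖z‖ ≤ max r 0 ∧ ∀ w : ℂ, ‖w‖ ≤ max r 0 → φ w ≤ φ z := by
      intro r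
      obtain ⟨z, hz, hzm⟩ := (isCompact_closedBall (0 : ℂ) (max r 0)).exists_isMaxOn
        ⟨0, by simp⟩ hφc.continuousOn
      exact ⟨z, by simpa using hz, fun w hw => hzm (by simpa using hw)⟩
    choose ζ hζ hζm using hmax
    let M : ℝ → ℝ := fun r => φ (ζ r)
    have hM : ∀ r, 0 ≤ M r := fun r => hφ0 _
    have hmono : Monotone M := fun r s hrs => hζm s _ ((hζ r).trans (max_le_max_right 0 hrs))
    set S := smallRing M hM with hSdef
    have hS : ∀ a ∈ S, Differentiable ℂ a := fun a ha => ha.1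
    have hfS : ∀ i ∈ I, ∀ j ∈ I, (fun z => f i z - f j z) ∈ S := by
      intro i hi j hj
      refine ⟨(hf i).sub (hf j), 1, fun r hr δ hδ hδ1 z hz => ?_⟩
      have h1 : ‖f i z - f j z‖ ≤ φ z :=
        Finset.single_le_sum (f := fun p : ι × ι => ‖f p.1 z - f p.2 z‖)
          (fun _ _ => norm_nonneg _) (Finset.mk_mem_product hi hj)
      have h2 : φ z ≤ M r := hζm r z (hz.trans (le_max_left _ _))
      have h3 : M r ≤ M (r * (1 + δ)) := hmono (by nlinarith)
      rw [pow_one, sizeBase, le_div_iff₀ hδ]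
      have := norm_nonneg (f i z - f j z)
      nlinarith
    have hcls := class_sum_eq_zero hS (fun a ha => deriv_mem_smallRing hmono ha)
      const_mem_smallRing hf I hfS _ (fun i _ => c i) (fun i _ => const_mem_smallRing _) le_rfl
      hsum
    by_cases hproper : ∃ j ∈ I, ¬ ExpRel S f j j₀
    · obtain ⟨j, hj, hjn⟩ := hproper
      refine ih (I.filter fun i => ExpRel S f i j₀) ?_
        (fun i hi k hk => hne i (Finset.mem_filter.1 hi).1 k (Finset.mem_filter.1 hk).1)
        (hcls j₀ hj₀) j₀ (Finset.mem_filter.2 ⟨hj₀, ExpRel.refl _⟩)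
      have : (I.filter fun i => ExpRel S f i j₀).card < I.card :=
        Finset.card_lt_card (Finset.filter_ssubset.2 ⟨j, hj, hjn⟩)
      omega
    push Not at hproper
    by_cases hsing : ∃ j ∈ I, j ≠ j₀
    · exfalso
      obtain ⟨j, hj, hjne⟩ := hsing
      obtain ⟨x, y, hxy⟩ := hne j hj j₀ hj₀ hjne
      refine not_all_related hf I hmono (fun r => ⟨ζ r, hζ r, rfl⟩) ?_
        (fun i hi k hk => (hproper i hi).trans hS (hproper k hk).symm)
      -- By Liouville's theorem the nonconstant difference is unbounded.
      rw [Filter.tendsto_atTop_atTop_iff_of_monotone hmono]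
      by_contra! hb
      obtain ⟨T, hT⟩ := hb
      refine hxy (Differentiable.apply_eq_apply_of_bounded (f := fun z => f j z - f j₀ z)
        ((hf j).sub (hf j₀)) ?_ x y)
      refine (isBounded_iff_forall_norm_le.2 ⟨T, ?_⟩)
      rintro _ ⟨z, rfl⟩
      have h1 : ‖f j z - f j₀ z‖ ≤ φ z :=
        Finset.single_le_sum (f := fun p : ι × ι => ‖f p.1 z - f p.2 z‖)
          (fun _ _ => norm_nonneg _) (Finset.mk_mem_product hj hj₀)
      have h2 : φ z ≤ M ‖z‖ := hζm ‖z‖ z (le_max_left _ _)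
      exact h1.trans (h2.trans (hT _).le)
    · push Not at hsing
      have h1 := hsum 0
      rw [Finset.sum_eq_single_of_mem j₀ hj₀ (fun i hi h => absurd (hsing i hi) h)] at h1
      exact (mul_eq_zero.1 h1).resolve_right (exp_ne_zero _)
end Borel

/-! ### Reduction to one variable -/

lemma dense_ne_of_not_const {m : ℕ} {G : (Fin m → ℂ) → ℂ} (hG : Differentiable ℂ G)
    (hne : ¬ ∃ c, ∀ z, G z = c) : Dense {b | G b ≠ G 0} := by
  intro b₀
  by_contra hb
  have hnhds : ∀ᶠ b in nhds b₀, G b = G 0 := by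
    have := isClosed_closure.isOpen_compl.mem_nhds hb
    filter_upwards [this] with b hb'
    by_contra h
    exact hb' (subset_closure h)
  refine hne ⟨G 0, fun z => ?_⟩
  -- Restriction to the complex line through `b₀` and `z`.
  have hline : Differentiable ℂ fun w : ℂ => b₀ + w • (z - b₀) := by fun_prop
  have hψ : AnalyticOnNhd ℂ (fun w : ℂ => G (b₀ + w • (z - b₀))) Set.univ := fun w _ =>
    (hG.comp hline).analyticAt w
  have hev : (fun w : ℂ => G (b₀ + w • (z - b₀))) =ᶠ[nhds 0] fun _ => G 0 := by
    have ht : Filter.Tendsto (fun w : ℂ => b₀ + w • (z - b₀)) (nhds 0) (nhds b₀) := by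
      simpa using hline.continuous.tendsto 0
    exact ht.eventually hnhds
  have := congrFun (hψ.eq_of_eventuallyEq (fun w _ => analyticAt_const) hev) 1
  simpa using this

/-- A nowhere zero entire function has an entire logarithm, a primitive of `deriv h / h`. -/
lemma exists_entire_log {h : ℂ → ℂ} (hh : Differentiable ℂ h) (h0 : ∀ z, h z ≠ 0) :
    ∃ L : ℂ → ℂ, Differentiable ℂ L ∧ ∀ z, exp (L z) = h z := by
  have hq : Differentiable ℂ fun z => deriv h z / h z := hh.deriv.div hh h0
  obtain ⟨L, hL0, hL⟩ := hq.isExactOn_univ.with_val_at 0 (log (h 0))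
  have hL' : ∀ z, HasDerivAt L (deriv h z / h z) z := fun z => hL z trivial
  refine ⟨L, fun z => (hL' z).differentiableAt, fun z => ?_⟩
  have hd : ∀ z, HasDerivAt (fun z => exp (L z) / h z) 0 z := by
    intro z
    refine (((hL' z).cexp).div (hh z).hasDerivAt (h0 z)).congr_deriv ?_
    field_simp [h0 z]
    ring
  have := is_const_of_deriv_eq_zero (fun z => (hd z).differentiableAt) (fun z => (hd z).deriv) z 0
  simp only [hL0, exp_log (h0 0), div_self (h0 0)] at this
  exact (div_eq_one_iff_eq (h0 z)).1 this

end BorelLemma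

theorem stmt6 {m t : ℕ} (η : Fin t → ((Fin m → ℂ) → ℂ))
    (hdiff : ∀ i, Differentiable ℂ (η i))
    (hnz : ∀ i z, η i z ≠ 0)
    (hindep : ∀ n : Fin t → ℤ, n ≠ 0 → ¬∃ c : ℂ, ∀ z, (∏ i, η i z ^ n i) = c)
    (P : MvPolynomial (Fin t) ℂ)
    (hP : ∀ z, MvPolynomial.eval (fun i => η i z) P = 0) :
    P = 0 := by
  let G : (Fin t →₀ ℕ) × (Fin t →₀ ℕ) → (Fin m → ℂ) → ℂ :=
    fun p z => ∏ i, η i z ^ ((p.1 i : ℤ) - p.2 i)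
  have hGd : ∀ p, Differentiable ℂ (G p) := fun p z => by
    have hi : ∀ i, DifferentiableAt ℂ (fun z => η i z ^ ((p.1 i : ℤ) - p.2 i)) z := fun i =>
      (differentiableAt_zpow.2 (Or.inl (hnz i z))).comp z (hdiff i z)
    exact (HasFDerivAt.finsetProd fun i _ => (hi i).hasFDerivAt).differentiableAt
  have hGne : ∀ p : (Fin t →₀ ℕ) × (Fin t →₀ ℕ), p.1 ≠ p.2 → ¬ ∃ c, ∀ z, G p z = c := by
    intro p hp
    refine hindep (fun i => (p.1 i : ℤ) - p.2 i) fun h => hp (Finsupp.ext fun i => ?_)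
    have := congrFun h i
    simp only [Pi.zero_apply] at this
    omega
  -- A line through the origin on which no ratio of distinct monomials is constant.
  obtain ⟨b, hb⟩ : ∃ b, ∀ p ∈ {p : (Fin t →₀ ℕ) × (Fin t →₀ ℕ) | p.1 ≠ p.2}, G p b ≠ G p 0 := by
    obtain ⟨b, hb⟩ := (dense_biInter_of_isOpen
      (S := {p : (Fin t →₀ ℕ) × (Fin t →₀ ℕ) | p.1 ≠ p.2}) (f := fun p => {b | G p b ≠ G p 0})
      (fun p _ => isOpen_ne_fun (hGd p).continuous continuous_const) (Set.to_countable _)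
      (fun p hp => dense_ne_of_not_const (hGd p) (hGne p hp))).nonempty
    exact ⟨b, by simpa using hb⟩
  have hlog : ∀ i, ∃ L : ℂ → ℂ, Differentiable ℂ L ∧ ∀ w, Complex.exp (L w) = η i (w • b) := fun i =>
    exists_entire_log ((hdiff i).comp (by fun_prop : Differentiable ℂ fun w : ℂ => w • b))
      fun w => hnz i _
  choose L hLd hL using hlog
  let f : (Fin t →₀ ℕ) → ℂ → ℂ := fun n w => ∑ i, n i * L i w
  have hf : ∀ n, Differentiable ℂ (f n) := fun n => by
    have := hLd
    fun_prop
  have hexp : ∀ n w, Complex.exp (f n w) = ∏ i, η i (w • b) ^ n i := by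
    intro n w
    simp only [f, Complex.exp_sum, Complex.exp_nat_mul, hL]
  have hsum : ∀ w, ∑ n ∈ P.support, P.coeff n * Complex.exp (f n w) = 0 := by
    intro w
    rw [← hP (w • b), MvPolynomial.eval_eq']
    simp only [hexp]
  have hG : ∀ p w, Complex.exp (f p.1 w - f p.2 w) = G p (w • b) := by
    intro p w
    rw [Complex.exp_sub, hexp, hexp, ← Finset.prod_div_distrib]
    refine Finset.prod_congr rfl fun i _ => ?_
    rw [zpow_sub₀ (hnz i _), zpow_natCast, zpow_natCast]
  have hzero := borel_lemma hf (fun n => P.coeff n) _ P.support le_rfl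
    (fun n _ n' _ hnn' => ⟨1, 0, fun h => hb (n, n') hnn' (by
      have h1 := hG (n, n') 1
      have h2 := hG (n, n') 0
      simp only [one_smul, zero_smul] at h1 h2
      rw [← h1, ← h2, h])⟩) hsum
  ext n
  by_contra hn
  exact hn (hzero n (MvPolynomial.mem_support_iff.2 hn))
end

section
/- Let h₁,…,h_{q} be nowhere zero holomorphic functions on ℂ^m, and suppose that for some integers N ≥ n ≥ 1 with q = N+n+2, the (N+n+2)×(N+n+2) matrix with rows (a^i₀,…,a^i_n, b^i₀h_i,…,b^i_Nh_i) has identically vanishing determinant, where for every choice of N+1 distinct row indices i₁<…<i_{N+1} both determinants det(a^i₀,…,a^i_n ; i ∉ {i₁,…,i_{N+1}}) and det(b^i₀,…,b^i_N ; i ∈ {i₁,…,i_{N+1}}) are nonzero. Then for every N+1 distinct indices i₁,…,i_{N+1} in {1,…,N+n+2}, there exist distinct indices j₁,…,j_{N+1} with {j₁,…,j_{N+1}} ≠ {i₁,…,i_{N+1}} such that (h_{j₁}·…·h_{j_{N+1}})/(h_{i₁}·…·h_{i_{N+1}}) is a nonzero constant. -/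
/-!
The determinant is multilinear in its rows, and the `i`-th row is the sum of an `a`-part and of `h i`
times a `b`-part. Expanding gives the Laplace expansion `∑ S, A_S * ∏ i ∈ S, h i = 0`
(`laplace_expansion`). The coefficient `A_S` vanishes unless `S` has `N + 1` elements, for dimension
reasons, and is nonzero if it does, by the hypothesis on the minors. The claim is then Borel's lemma
(`borel_lemma`) for the nowhere vanishing functions `A_S * ∏ i ∈ S, h i`.

Borel's lemma is reduced to one variable by restriction to lines, and to a relation without proper
vanishing partial sums by induction on its length. In that case, divide by one of the terms to get
a relation between functions `exp (g i)`, one of which is `1`, and let `R` be the ring generated by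
the derivatives of all orders of the `g i`. Repeated differentiation and elimination show that each
`exp (g i)` is a quotient `B / A` of elements of `R` (`ratio_mem_of_indecomposable`).

Write `G r` for the maximum of `∑ ‖g i z‖` on `‖z‖ ≤ r`. By Cauchy's estimates the elements of `R`
are bounded polynomially in terms of `G`. Jensen's formula applied to `A` and `B`, the Poisson
formula for `Re (g i) = log ‖B‖ - log ‖A‖` and the Borel–Carathéodory inequality then yield
`G ρ ≤ C δ⁻³ (1 + log (1 + G (ρ (1 + δ))))` for `ρ ≥ 1` and `0 < δ ≤ 1`. Such a function `G` is
bounded (`bounded_of_growth`), so the `g i` are constant by Liouville's theorem.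
-/

/-! ### Elimination in differential rings -/

section Algebra

variable {A ι : Type*} [CommRing A] [IsDomain A] [Algebra ℂ A]

/-- A relation `∑ P i * u i = 0` with nonzero coefficients in a `D`-stable ring `R`, between solutions
of `D (u i) = u i * φ i`, forces two of the `u i` to be proportional over `R`. Eliminating one index
between the relation and its derivative shortens the relation; if the result is trivial, the
logarithmic derivatives of all the terms agree and the terms are proportional over `ℂ` by `hW`. -/
lemma exists_ratio_of_relation (D : Derivation ℂ A A) (R : Subalgebra ℂ A)
    (hD : ∀ x ∈ R, D x ∈ R)
    (hW : ∀ x y : A, y ≠ 0 → y * D x = x * D y → ∃ c : ℂ, x = c • y)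
    (u φ : ι → A) (hφ : ∀ i, φ i ∈ R) (hu : ∀ i, D (u i) = u i * φ i) (hu0 : ∀ i, u i ≠ 0)
    (k : ℕ) : ∀ (S : Finset ι) (P : ι → A), S.card = k → S.Nonempty →
      (∀ i ∈ S, P i ∈ R ∧ P i ≠ 0) → ∑ i ∈ S, P i * u i = 0 →
      ∃ i ∈ S, ∃ j ∈ S, i ≠ j ∧ ∃ a ∈ R, ∃ b ∈ R, a ≠ 0 ∧ b ≠ 0 ∧ a * u i = b * u j := by
  classical
  induction k using Nat.strong_induction_on with
  | _ k ih =>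
  intro S P hk hS hP hsum
  obtain ⟨j, hj⟩ := hS
  -- differentiate the relation and eliminate the index `j`
  set Q : ι → A := fun i => P j * (D (P i) + P i * φ i) - (D (P j) + P j * φ j) * P i with hQ
  have hQj : Q j = 0 := by simp only [hQ]; ring
  have hQR : ∀ i ∈ S, Q i ∈ R := fun i hi =>
    R.sub_mem (R.mul_mem (hP j hj).1 (R.add_mem (hD _ (hP i hi).1) (R.mul_mem (hP i hi).1 (hφ i))))
      (R.mul_mem (R.add_mem (hD _ (hP j hj).1) (R.mul_mem (hP j hj).1 (hφ j))) (hP i hi).1)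
  have hQsum : ∑ i ∈ S, Q i * u i = 0 := by
    have h1 : ∑ i ∈ S, (D (P i) + P i * φ i) * u i = 0 := by
      have := congrArg D hsum
      rw [map_sum, map_zero] at this
      rw [← this]
      refine Finset.sum_congr rfl fun i _ => ?_
      rw [D.leibniz, hu, smul_eq_mul, smul_eq_mul]; ring
    calc ∑ i ∈ S, Q i * u i
        = P j * ∑ i ∈ S, (D (P i) + P i * φ i) * u i
          - (D (P j) + P j * φ j) * ∑ i ∈ S, P i * u i := by
          rw [Finset.mul_sum, Finset.mul_sum, ← Finset.sum_sub_distrib]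
          exact Finset.sum_congr rfl fun i _ => by simp only [hQ]; ring
      _ = 0 := by rw [h1, hsum]; ring
  by_cases hne : (S.filter fun i => Q i ≠ 0).Nonempty
  · have hlt : (S.filter fun i => Q i ≠ 0).card < k := by
      rw [← hk]
      refine Finset.card_lt_card ((Finset.filter_ssubset).2 ⟨j, hj, by simp [hQj]⟩)
    obtain ⟨i, hi, l, hl, hil, h⟩ := ih _ hlt _ Q rfl hne
      (fun i hi => ⟨hQR i (Finset.mem_filter.1 hi).1, (Finset.mem_filter.1 hi).2⟩)
      (by
        refine (Finset.sum_subset (Finset.filter_subset _ _) fun i hi hi' => ?_).trans hQsum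
        have : Q i = 0 := by
          by_contra h0; exact hi' (Finset.mem_filter.2 ⟨hi, h0⟩)
        rw [this, zero_mul])
    exact ⟨i, (Finset.mem_filter.1 hi).1, l, (Finset.mem_filter.1 hl).1, hil, h⟩
  · have hQ0 : ∀ i ∈ S, Q i = 0 := by
      intro i hi
      by_contra h0
      exact hne ⟨i, Finset.mem_filter.2 ⟨hi, h0⟩⟩
    -- a one-term relation is impossible
    obtain ⟨i, hi, hij⟩ : ∃ i ∈ S, i ≠ j := by
      by_contra! hcon
      have : S = {j} := Finset.eq_singleton_iff_unique_mem.2 ⟨hj, hcon⟩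
      rw [this, Finset.sum_singleton] at hsum
      exact mul_ne_zero (hP j hj).2 (hu0 j) hsum
    obtain ⟨c, hc⟩ := hW (P i * u i) (P j * u j) (mul_ne_zero (hP j hj).2 (hu0 j)) (by
      have h0 := hQ0 i hi
      simp only [hQ] at h0
      rw [D.leibniz, D.leibniz, hu, hu]
      simp only [smul_eq_mul]
      linear_combination (u i * u j) * h0)
    refine ⟨i, hi, j, hj, hij, P i, (hP i hi).1, c • P j, R.smul_mem (hP j hj).1 c, (hP i hi).2,
      ?_, by rw [hc, smul_mul_assoc]⟩
    intro h0
    have : P i * u i = 0 := by rw [hc, ← smul_mul_assoc, h0, zero_mul]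
    exact mul_ne_zero (hP i hi).2 (hu0 i) this

/-- If no proper nonempty partial sum of the relation vanishes, then any two of the `u i` are
proportional over `R`: one index is absorbed into another index proportional to it, and the shorter
relation is again indecomposable. -/
lemma ratio_mem_of_indecomposable (D : Derivation ℂ A A) (R : Subalgebra ℂ A)
    (hD : ∀ x ∈ R, D x ∈ R)
    (hW : ∀ x y : A, y ≠ 0 → y * D x = x * D y → ∃ c : ℂ, x = c • y)
    (u φ : ι → A) (hφ : ∀ i, φ i ∈ R) (hu : ∀ i, D (u i) = u i * φ i) (hu0 : ∀ i, u i ≠ 0)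
    (k : ℕ) : ∀ (S : Finset ι) (P : ι → A), S.card = k →
      (∀ i ∈ S, P i ∈ R ∧ P i ≠ 0) → ∑ i ∈ S, P i * u i = 0 →
      (∀ U ⊆ S, U.Nonempty → ∑ i ∈ U, P i * u i = 0 → U = S) →
      ∀ i ∈ S, ∀ j ∈ S, ∃ a ∈ R, ∃ b ∈ R, a ≠ 0 ∧ b ≠ 0 ∧ a * u i = b * u j := by
  classical
  have hrefl : ∀ i, ∃ a ∈ R, ∃ b ∈ R, a ≠ 0 ∧ b ≠ 0 ∧ a * u i = b * u i :=
    fun i => ⟨1, R.one_mem, 1, R.one_mem, one_ne_zero, one_ne_zero, rfl⟩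
  have hsymm : ∀ i j, (∃ a ∈ R, ∃ b ∈ R, a ≠ 0 ∧ b ≠ 0 ∧ a * u i = b * u j) →
      ∃ a ∈ R, ∃ b ∈ R, a ≠ 0 ∧ b ≠ 0 ∧ a * u j = b * u i := by
    rintro i j ⟨a, ha, b, hb, ha0, hb0, h⟩
    exact ⟨b, hb, a, ha, hb0, ha0, h.symm⟩
  have htrans : ∀ i j l, (∃ a ∈ R, ∃ b ∈ R, a ≠ 0 ∧ b ≠ 0 ∧ a * u i = b * u j) →
      (∃ a ∈ R, ∃ b ∈ R, a ≠ 0 ∧ b ≠ 0 ∧ a * u j = b * u l) →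
      ∃ a ∈ R, ∃ b ∈ R, a ≠ 0 ∧ b ≠ 0 ∧ a * u i = b * u l := by
    rintro i j l ⟨a, ha, b, hb, ha0, hb0, h⟩ ⟨a', ha', b', hb', ha0', hb0', h'⟩
    exact ⟨a' * a, R.mul_mem ha' ha, b * b', R.mul_mem hb hb', mul_ne_zero ha0' ha0,
      mul_ne_zero hb0 hb0', by linear_combination a' * h + b * h'⟩
  induction k with
  | zero =>
    intro S P hk _ _ _ i hi
    rw [Finset.card_eq_zero.1 hk] at hi
    simp at hi
  | succ k ih =>
  intro S P hk hP hsum hind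
  have hS : S.Nonempty := Finset.card_pos.1 (by omega)
  obtain ⟨i, hi, j, hj, hij, a, ha, b, hb, ha0, hb0, hab⟩ :=
    exists_ratio_of_relation D R hD hW u φ hφ hu hu0 _ S P rfl hS hP hsum
  have hjS' : j ∈ S.erase i := Finset.mem_erase.2 ⟨hij.symm, hj⟩
  -- after multiplication by `a`, the term of index `i` is absorbed by that of index `j`
  set Q : ι → A := fun l => a * P l + if l = j then b * P i else 0 with hQ
  have key : ∀ U ⊆ S.erase i, j ∈ U →
      ∑ l ∈ U, Q l * u l = a * ∑ l ∈ insert i U, P l * u l := by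
    intro U hU hjU
    rw [Finset.sum_insert (fun h => by simpa using hU h), mul_add, Finset.mul_sum]
    simp only [hQ, add_mul, Finset.sum_add_distrib, ite_mul, zero_mul]
    rw [Finset.sum_ite_eq' U j, if_pos hjU, add_comm]
    congr 1
    · linear_combination (-P i) * hab
    · exact Finset.sum_congr rfl fun l _ => by ring
  have key' : ∀ U, j ∉ U → ∑ l ∈ U, Q l * u l = a * ∑ l ∈ U, P l * u l := by
    intro U hjU
    rw [Finset.mul_sum]
    refine Finset.sum_congr rfl fun l hl => ?_
    have : l ≠ j := fun h => hjU (h ▸ hl)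
    simp only [hQ, if_neg this]; ring
  have hSi : ∀ U ⊆ S.erase i, U.Nonempty → ∑ l ∈ U, Q l * u l = 0 → U = S.erase i := by
    intro U hU hUne h0
    by_cases hjU : j ∈ U
    · rw [key U hU hjU] at h0
      have := hind (insert i U) (Finset.insert_subset hi (hU.trans (Finset.erase_subset _ _)))
        ⟨i, Finset.mem_insert_self _ _⟩ ((mul_eq_zero.1 h0).resolve_left ha0)
      rw [← this, Finset.erase_insert (fun h => by simpa using hU h)]
    · rw [key' U hjU] at h0
      have := hind U (hU.trans (Finset.erase_subset _ _)) hUne ((mul_eq_zero.1 h0).resolve_left ha0)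
      exact absurd (hU (this ▸ hi)) (by simp)
  -- everything else is equivalent to `j`
  have hall : ∀ l ∈ S.erase i, ∃ a ∈ R, ∃ b ∈ R, a ≠ 0 ∧ b ≠ 0 ∧ a * u l = b * u j := by
    by_cases hQj : Q j = 0
    · have h1 := hSi {j} (by simpa using ⟨hij.symm, hj⟩) ⟨j, by simp⟩ (by simp [hQj])
      intro l hl
      rw [← h1, Finset.mem_singleton] at hl
      exact hl ▸ hrefl l
    · intro l hl
      refine ih (S.erase i) Q (by rw [Finset.card_erase_of_mem hi]; omega) ?_ ?_ hSi l hl j hjS'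
      · intro l hl
        have hlS := Finset.mem_of_mem_erase hl
        by_cases hlj : l = j
        · subst hlj
          refine ⟨?_, hQj⟩
          simp only [hQ, if_true]
          exact R.add_mem (R.mul_mem ha (hP l hlS).1) (R.mul_mem hb (hP i hi).1)
        · simp only [hQ, if_neg hlj, add_zero]
          exact ⟨R.mul_mem ha (hP l hlS).1, mul_ne_zero ha0 (hP l hlS).2⟩
      · rw [key _ le_rfl hjS', Finset.insert_erase hi, hsum, mul_zero]
  have hall' : ∀ l ∈ S, ∃ a ∈ R, ∃ b ∈ R, a ≠ 0 ∧ b ≠ 0 ∧ a * u l = b * u j := by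
    intro l hl
    by_cases hli : l = i
    · exact hli ▸ ⟨a, ha, b, hb, ha0, hb0, hab⟩
    · exact hall l (Finset.mem_erase.2 ⟨hli, hl⟩)
  intro l hl l' hl'
  exact htrans l j l' (hall' l hl) (hsymm l' j (hall' l' hl'))

end Algebra

/-! ### Entire functions: logarithms and bounds through circle averages -/

lemma exists_entire_log_s11 {f : ℂ → ℂ} (hf : Differentiable ℂ f) (h0 : ∀ z, f z ≠ 0) :
    ∃ g : ℂ → ℂ, Differentiable ℂ g ∧ ∀ z, f z = Complex.exp (g z) := by
  have hharm : InnerProductSpace.HarmonicOnNhd (fun z => Real.log ‖f z‖) Set.univ :=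
    fun z _ => (hf.analyticAt z).harmonicAt_log_norm (h0 z)
  obtain ⟨F, hF, hre⟩ := hharm.exists_analyticOnNhd_univ_re_eq
  have hFd : Differentiable ℂ F := fun z => (hF z trivial).differentiableAt
  have hnorm : ∀ z, ‖f z * Complex.exp (-F z)‖ = 1 := by
    intro z
    have h1 : (F z).re = Real.log ‖f z‖ := congrFun hre z
    rw [norm_mul, Complex.norm_exp, Complex.neg_re, h1, Real.exp_neg,
      Real.exp_log (norm_pos_iff.2 (h0 z)), mul_inv_cancel₀ (norm_ne_zero_iff.2 (h0 z))]
  have hd : Differentiable ℂ fun z => f z * Complex.exp (-F z) := by fun_prop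
  obtain ⟨c, hc⟩ := hd.exists_const_forall_eq_of_bounded (by
    rw [isBounded_iff_forall_norm_le]
    exact ⟨1, by rintro _ ⟨z, rfl⟩; exact (hnorm z).le⟩)
  have hc0 : c ≠ 0 := by
    rintro rfl
    have := hnorm 0
    rw [hc] at this
    simp at this
  refine ⟨fun z => Complex.log c + F z, by fun_prop, fun z => ?_⟩
  rw [Complex.exp_add, Complex.exp_log hc0, ← hc z, mul_assoc, ← Complex.exp_add]
  simp

/-- A nonnegative monotone function dominated by the logarithm of its value at a slightly larger
radius is bounded. If it exceeds a large constant `K` at `ρ`, then along the radii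
`r (n + 1) = r n * (1 + 2⁻ⁿ)`, which stay below `ρ * exp 2`, it is at least `K * 2 ^ ((k + 1) * n)`. -/
lemma bounded_of_growth (G : ℝ → ℝ) (hG0 : ∀ r, 0 ≤ G r) (hG : Monotone G) (C : ℝ) (hC : 0 < C)
    (k : ℕ) (h : ∀ ρ, 1 ≤ ρ → ∀ δ, 0 < δ → δ ≤ 1 →
      G ρ ≤ C / δ ^ k * (1 + Real.log (1 + G (ρ * (1 + δ))))) :
    ∃ K, ∀ ρ, 1 ≤ ρ → G ρ ≤ K := by
  -- the exponential beats the power of degree `k + 1`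
  obtain ⟨K, hK1, hK⟩ : ∃ K : ℝ, 1 ≤ K ∧
      ∀ y, K ≤ y → 1 + 2 ^ (k + 1) * y ^ (k + 1) ≤ Real.exp (y / C - 1) := by
    have h1 := (isLittleO_pow_exp_pos_mul_atTop (k := k + 1) (b := C⁻¹) (inv_pos.2 hC)).def
      (c := (2 ^ (k + 1) * 2 * Real.exp 1)⁻¹) (by positivity)
    obtain ⟨K, hK⟩ := Filter.eventually_atTop.1 h1
    refine ⟨max K 1, le_max_right _ _, fun y hy => ?_⟩
    have hy1 : 1 ≤ y := (le_max_right _ _).trans hy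
    have h2 := hK y ((le_max_left _ _).trans hy)
    rw [Real.norm_of_nonneg (by positivity), Real.norm_of_nonneg (by positivity)] at h2
    rw [Real.exp_sub, le_div_iff₀ (Real.exp_pos 1), div_eq_inv_mul]
    rw [inv_mul_eq_div, le_div_iff₀ (by positivity)] at h2
    have h3 : (1 : ℝ) ≤ 2 ^ (k + 1) * y ^ (k + 1) := by
      have := one_le_pow₀ (n := k + 1) hy1
      have h4 := one_le_pow₀ (n := k + 1) (one_le_two (α := ℝ))
      nlinarith
    have he := Real.exp_pos 1
    nlinarith
  refine ⟨K, fun ρ hρ => ?_⟩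
  by_contra! hcon
  -- iterate the inequality along radii increasing to a finite limit
  let r : ℕ → ℝ := fun n => Nat.rec ρ (fun n x => x * (1 + (1 / 2) ^ n)) n
  have hr : ∀ n, r (n + 1) = r n * (1 + (1 / 2) ^ n) := fun n => rfl
  have hr1 : ∀ n, 1 ≤ r n := by
    intro n
    induction n with
    | zero => exact hρ
    | succ n ih =>
      rw [hr]
      have : (0 : ℝ) ≤ (1 / 2) ^ n := by positivity
      nlinarith
  have hrb : ∀ n, r n ≤ ρ * Real.exp (2 - 2 * (1 / 2) ^ n) := by
    intro n
    induction n with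
    | zero => simp [r]
    | succ n ih =>
      rw [hr]
      have h1 : (1 : ℝ) + (1 / 2) ^ n ≤ Real.exp ((1 / 2) ^ n) := by
        linarith [Real.add_one_le_exp ((1 / 2 : ℝ) ^ n)]
      calc r n * (1 + (1 / 2) ^ n)
          ≤ (ρ * Real.exp (2 - 2 * (1 / 2) ^ n)) * Real.exp ((1 / 2) ^ n) := by gcongr
        _ = ρ * Real.exp (2 - 2 * (1 / 2) ^ (n + 1)) := by
          rw [mul_assoc, ← Real.exp_add, pow_succ]; ring_nf
  have hx : ∀ n, K * 2 ^ ((k + 1) * n) ≤ G (r n) := by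
    intro n
    induction n with
    | zero => simpa [r] using hcon.le
    | succ n ih =>
      have h1 := h (r n) (hr1 n) ((1 / 2) ^ n) (by positivity)
        (pow_le_one₀ (by norm_num) (by norm_num))
      rw [← hr] at h1
      have h2 : C / ((1 / 2 : ℝ) ^ n) ^ k = C * 2 ^ (k * n) := by
        rw [one_div, inv_pow, inv_pow, div_inv_eq_mul, ← pow_mul, mul_comm n]
      rw [h2] at h1
      have h3 : K * 2 ^ n / C - 1 ≤ Real.log (1 + G (r (n + 1))) := by
        have h4 := ih.trans h1
        rw [sub_le_iff_le_add, div_le_iff₀ hC]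
        have h5 : (2 : ℝ) ^ ((k + 1) * n) = 2 ^ (k * n) * 2 ^ n := by
          rw [← pow_add]; ring_nf
        rw [h5] at h4
        refine le_of_mul_le_mul_left ?_ (show (0 : ℝ) < 2 ^ (k * n) by positivity)
        linarith
      have h6 := hG0 (r (n + 1))
      rw [Real.le_log_iff_exp_le (by linarith)] at h3
      have h7 := hK (K * 2 ^ n) (by
        have := one_le_pow₀ (n := n) (one_le_two (α := ℝ))
        nlinarith)
      have h8 : K * 2 ^ ((k + 1) * (n + 1)) ≤ 2 ^ (k + 1) * (K * 2 ^ n) ^ (k + 1) := by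
        have h9 : (2 : ℝ) ^ ((k + 1) * (n + 1)) = 2 ^ (k + 1) * (2 ^ n) ^ (k + 1) := by
          rw [← pow_mul, ← pow_add]; ring_nf
        rw [h9, mul_pow]
        have h10 : K ≤ K ^ (k + 1) := le_self_pow₀ hK1 (by omega)
        have h11 : (0 : ℝ) ≤ 2 ^ (k + 1) * (2 ^ n) ^ (k + 1) := by positivity
        nlinarith
      linarith
  have hfin : ∀ n, (2 : ℝ) ^ n ≤ G (ρ * Real.exp 2) := by
    intro n
    calc (2 : ℝ) ^ n ≤ 1 * 2 ^ ((k + 1) * n) := by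
          rw [one_mul]; exact pow_le_pow_right₀ one_le_two (by nlinarith)
      _ ≤ K * 2 ^ ((k + 1) * n) := by gcongr
      _ ≤ G (r n) := hx n
      _ ≤ G (ρ * Real.exp 2) := by
        refine hG ((hrb n).trans ?_)
        have : (0 : ℝ) ≤ (1 / 2) ^ n := by positivity
        gcongr
        linarith
  obtain ⟨n, hn⟩ := pow_unbounded_of_one_lt (G (ρ * Real.exp 2)) (one_lt_two (α := ℝ))
  exact absurd (hfin n) (not_le.2 hn)

open Real Metric in
/-- Jensen's formula bounds the mean of `log ‖A‖` from below independently of the radius, so that the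
mean of `|log ‖A‖| = 2 log⁺ ‖A‖ - log ‖A‖` is controlled by the maximum modulus. -/
lemma circleAverage_abs_log_le {A : ℂ → ℂ} (hA : Differentiable ℂ A) :
    ∃ C : ℝ, ∀ r M : ℝ, 1 ≤ r → 1 ≤ M → (∀ z ∈ sphere (0 : ℂ) r, ‖A z‖ ≤ M) →
      circleAverage (fun z => |log ‖A z‖|) 0 r ≤ C + 2 * log M := by
  refine ⟨-log ‖meromorphicTrailingCoeffAt A 0‖, fun r M hr hM hb => ?_⟩
  have hr0 : 0 < r := by linarith
  have han : ∀ U : Set ℂ, AnalyticOnNhd ℂ A U := fun U z _ => hA.analyticAt z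
  have hmer : ∀ U : Set ℂ, MeromorphicOn A U := fun U => (han U).meromorphicOn
  have hjensen := (hmer (closedBall 0 |r|)).circleAverage_log_norm hr0.ne'
  have hpos : 0 ≤ ∑ᶠ u, MeromorphicOn.divisor A (closedBall 0 |r|) u * log (r * ‖0 - u‖⁻¹) := by
    refine finsum_nonneg fun u => ?_
    by_cases hu : u ∈ closedBall (0 : ℂ) |r|
    · have h1 : 0 ≤ log (r * ‖0 - u‖⁻¹) := by
        by_cases hu0 : u = 0
        · simp [hu0]
        · refine log_nonneg ?_
          have h2 : 0 < ‖u‖ := norm_pos_iff.2 hu0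
          rw [zero_sub, norm_neg, ← div_eq_mul_inv, le_div_iff₀ h2, one_mul]
          simpa [abs_of_pos hr0] using hu
      have h2 := MeromorphicOn.AnalyticOnNhd.divisor_nonneg (han (closedBall (0 : ℂ) |r|)) u
      exact mul_nonneg (by exact_mod_cast h2) h1
    · simp [hu]
  have hpos2 : 0 ≤ MeromorphicOn.divisor A (closedBall 0 |r|) 0 * log r :=
    mul_nonneg (by exact_mod_cast MeromorphicOn.AnalyticOnNhd.divisor_nonneg (han (closedBall (0 : ℂ) |r|)) 0) (log_nonneg hr)
  have hint1 : CircleIntegrable (fun z => log ‖A z‖) 0 r := (hmer _).circleIntegrable_log_norm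
  have hint2 : CircleIntegrable (fun z => log⁺ ‖A z‖) 0 r := (hmer _).circleIntegrable_posLog_norm
  have hle : circleAverage (fun z => log⁺ ‖A z‖) 0 r ≤ log M := by
    refine circleAverage_mono_on_of_le_circle hint2 fun z hz => ?_
    rw [abs_of_pos hr0] at hz
    have h1 := posLog_le_posLog (norm_nonneg _) (hb z hz)
    rwa [posLog_eq_log (x := M) (hM.trans (le_abs_self M))] at h1
  have heq : (fun z => |log ‖A z‖|) = fun z => (log⁺ ‖A z‖ + log⁺ ‖A z‖) - log ‖A z‖ := by
    funext z
    rw [← half_mul_log_add_log_abs]; ring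
  have hint3 : CircleIntegrable (fun z => log⁺ ‖A z‖ + log⁺ ‖A z‖) 0 r := hint2.add hint2
  rw [heq, circleAverage_fun_sub hint3 hint1, circleAverage_fun_add hint2 hint2]
  linarith

open Real Metric in
/-- The Poisson formula together with the Harnack bound for the Poisson kernel. -/
lemma abs_re_le_circleAverage {g : ℂ → ℂ} (hg : Differentiable ℂ g) {r : ℝ} {w : ℂ}
    (hw : ‖w‖ < r) :
    |(g w).re| ≤ (r + ‖w‖) / (r - ‖w‖) * circleAverage (fun z => |(g z).re|) 0 r := by
  have hr : 0 < r := (norm_nonneg w).trans_lt hw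
  have hwb : w ∈ ball (0 : ℂ) r := by simpa using hw
  have hh : InnerProductSpace.HarmonicOnNhd (fun z => (g z).re) (closedBall 0 r) :=
    fun z _ => (hg.analyticAt z).harmonicAt_re
  have hp := hh.circleAverage_re_herglotzRieszKernel_smul hwb
  rw [← hp]
  have hcont : ContinuousOn (fun z => (herglotzRieszKernel 0 w z).re) (sphere 0 |r|) := by
    exact Complex.continuous_re.comp_continuousOn (continuousOn_herglotzRieszKernel_sphere hwb)
  have hcg : Continuous fun z => (g z).re := Complex.continuous_re.comp hg.continuous
  refine abs_circleAverage_le_circleAverage_abs.trans ?_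
  have hsm : (r + ‖w‖) / (r - ‖w‖) * circleAverage (fun z => |(g z).re|) 0 r =
      circleAverage (fun z => (r + ‖w‖) / (r - ‖w‖) * |(g z).re|) 0 r := by
    simp only [← smul_eq_mul]
    rw [circleAverage_fun_smul]
  rw [hsm]
  refine circleAverage_mono ?_ ?_ ?_
  · refine ContinuousOn.circleIntegrable' ?_
    exact (hcont.mul hcg.continuousOn).abs
  · exact (by fun_prop : Continuous fun z => (r + ‖w‖) / (r - ‖w‖) * |(g z).re|).continuousOn.circleIntegrable'
  · intro z hz
    rw [abs_of_pos hr] at hz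
    have h1 := re_herglotzRieszKernel_le hz hwb
    have h2 := le_re_herglotzRieszKernel hz hwb
    simp only [sub_zero] at h1 h2
    have h3 : 0 ≤ (r - ‖w‖) / (r + ‖w‖) := div_nonneg (by linarith) (by positivity)
    simp only [Pi.abs_apply, smul_eq_mul, Pi.mul_apply, Function.comp_apply, abs_mul,
      herglotzRieszKernel_def, sub_zero]
    rw [abs_of_nonneg (h3.trans h2)]
    gcongr

open Real Metric in
/-- If `exp g = B / A`, then `Re g = log ‖B‖ - log ‖A‖` away from the zeros of `A`, which are
negligible on circles. -/
lemma circleAverage_abs_re_le {A B g : ℂ → ℂ} (hA : Differentiable ℂ A) (hB : Differentiable ℂ B)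
    (hA0 : A ≠ 0) (h : ∀ z, A z * Complex.exp (g z) = B z) :
    ∃ C : ℝ, 0 ≤ C ∧ ∀ r M : ℝ, 1 ≤ r → 1 ≤ M → (∀ z ∈ sphere (0 : ℂ) r, ‖A z‖ ≤ M ∧ ‖B z‖ ≤ M) →
      circleAverage (fun z => |(g z).re|) 0 r ≤ C + 4 * log M := by
  obtain ⟨C₁, h₁⟩ := circleAverage_abs_log_le hA
  obtain ⟨C₂, h₂⟩ := circleAverage_abs_log_le hB
  refine ⟨|C₁ + C₂|, abs_nonneg _, fun r M hr hM hb => ?_⟩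
  have hr0 : 0 < r := by linarith
  obtain ⟨x, hx⟩ : ∃ x, A x ≠ 0 := by
    by_contra! hcon
    exact hA0 (funext hcon)
  have hanA : AnalyticOnNhd ℂ A Set.univ := fun z _ => hA.analyticAt z
  have hmer : ∀ F : ℂ → ℂ, Differentiable ℂ F → MeromorphicOn F (sphere 0 |r|) :=
    fun F hF z _ => (hF.analyticAt z).meromorphicAt
  have hFint : ∀ F : ℂ → ℂ, Differentiable ℂ F → CircleIntegrable (fun z => |log ‖F z‖|) 0 r :=
    fun F hF => (hmer F hF).circleIntegrable_log_norm.abs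
  have hcod : (fun z => |(g z).re|) =ᶠ[Filter.codiscreteWithin (sphere 0 |r|)]
      fun z => |log ‖B z‖ - log ‖A z‖| := by
    have := hanA.preimage_zero_mem_codiscreteWithin hx trivial isConnected_univ
    have := Filter.codiscreteWithin_mono (Set.subset_univ (sphere (0 : ℂ) |r|)) this
    filter_upwards [this] with z hz
    have hz0 : A z ≠ 0 := by simpa using hz
    rw [← h z, norm_mul, log_mul (norm_ne_zero_iff.2 hz0) (by simp), Complex.norm_exp, log_exp]
    simp
  have hsub : CircleIntegrable (fun z => |log ‖B z‖ - log ‖A z‖|) 0 r :=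
    ((hmer B hB).circleIntegrable_log_norm.sub (hmer A hA).circleIntegrable_log_norm).abs
  have hadd : CircleIntegrable (fun z => |log ‖A z‖| + |log ‖B z‖|) 0 r :=
    (hFint A hA).add (hFint B hB)
  have hle : circleAverage (fun z => |log ‖B z‖ - log ‖A z‖|) 0 r ≤
      circleAverage (fun z => |log ‖A z‖| + |log ‖B z‖|) 0 r :=
    circleAverage_mono hsub hadd fun z _ => by
      rw [add_comm]; exact abs_sub _ _
  rw [circleAverage_congr_codiscreteWithin hcod hr0.ne']
  rw [circleAverage_fun_add (hFint A hA) (hFint B hB)] at hle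
  have := h₁ r M hr hM fun z hz => (hb z hz).1
  have := h₂ r M hr hM fun z hz => (hb z hz).2
  linarith [le_abs_self (C₁ + C₂)]

open Real Metric in
/-- If `exp g = B / A` with `A` and `B` bounded by `M` on a slightly larger disc, then `g` is
`O(log M)`: the mean of `|Re g|` is `O(log M)`, hence so is `Re g` by the Poisson formula, and then
`g` itself by the Borel–Carathéodory inequality. -/
lemma norm_le_of_quotient {A B g : ℂ → ℂ} (hA : Differentiable ℂ A) (hB : Differentiable ℂ B)
    (hg : Differentiable ℂ g) (hA0 : A ≠ 0) (h : ∀ z, A z * Complex.exp (g z) = B z) :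
    ∃ C : ℝ, 0 ≤ C ∧ ∀ ρ δ M : ℝ, 1 ≤ ρ → 0 < δ → δ ≤ 1 → 1 ≤ M →
      (∀ z ∈ closedBall (0 : ℂ) (ρ * (1 + δ / 2)), ‖A z‖ ≤ M ∧ ‖B z‖ ≤ M) →
      ∀ z ∈ closedBall (0 : ℂ) ρ, ‖g z‖ ≤ C / δ ^ 2 * (1 + log M) := by
  obtain ⟨C, hC, hmain⟩ := circleAverage_abs_re_le hA hB hA0 h
  refine ⟨128 * (C + 4) + 8 + 12 * ‖g 0‖, by positivity, fun ρ δ M hρ hδ hδ1 hM hb z hz => ?_⟩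
  have hρ0 : 0 < ρ := by linarith
  have hlM : 0 ≤ log M := log_nonneg hM
  have hav := hmain (ρ * (1 + δ / 2)) M (by nlinarith) hM
    (fun z hz => hb z (sphere_subset_closedBall hz))
  have hzρ : ‖z‖ ≤ ρ := by simpa using hz
  set X : ℝ := 16 / δ * (C + 4 * log M) with hX
  have hX0 : 0 ≤ X := by positivity
  have hre : ∀ w, ‖w‖ < ρ * (1 + δ / 4) → (g w).re ≤ X := by
    intro w hw
    have hw2 : ‖w‖ < ρ * (1 + δ / 2) := hw.trans (by nlinarith)
    refine (le_abs_self _).trans ((abs_re_le_circleAverage hg hw2).trans ?_)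
    have hpos : 0 < ρ * (1 + δ / 2) - ‖w‖ := by linarith
    have hfrac : (ρ * (1 + δ / 2) + ‖w‖) / (ρ * (1 + δ / 2) - ‖w‖) ≤ 16 / δ := by
      rw [div_le_div_iff₀ hpos hδ]
      nlinarith [mul_pos hρ0 hδ]
    have h0 : 0 ≤ circleAverage (fun z => |(g z).re|) 0 (ρ * (1 + δ / 2)) :=
      circleAverage_nonneg_of_nonneg fun z _ => abs_nonneg _
    calc _ ≤ 16 / δ * circleAverage (fun z => |(g z).re|) 0 (ρ * (1 + δ / 2)) := by gcongr
      _ ≤ X := by rw [hX]; gcongr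
  have hR : 0 < ρ * (1 + δ / 4) := by positivity
  have hzR : ‖z‖ < ρ * (1 + δ / 4) := by nlinarith
  have hbc := Complex.borelCaratheodory (M := X + 1) (by linarith) hg.differentiableOn
    (fun w hw => (hre w (by simpa using hw)).trans (by linarith)) hR
    (show z ∈ ball 0 (ρ * (1 + δ / 4)) by simpa using hzR)
  refine hbc.trans ?_
  have hden : 0 < ρ * (1 + δ / 4) - ‖z‖ := by linarith
  have hf1 : ‖z‖ / (ρ * (1 + δ / 4) - ‖z‖) ≤ 4 / δ := by
    rw [div_le_div_iff₀ hden hδ]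
    nlinarith [mul_pos hρ0 hδ, norm_nonneg z]
  have hf2 : (ρ * (1 + δ / 4) + ‖z‖) / (ρ * (1 + δ / 4) - ‖z‖) ≤ 12 / δ := by
    rw [div_le_div_iff₀ hden hδ]
    nlinarith [mul_pos hρ0 hδ, norm_nonneg z]
  have h1δ : 1 / δ ≤ 1 / δ ^ 2 := by
    apply one_div_le_one_div_of_le (by positivity)
    nlinarith
  calc 2 * (X + 1) * ‖z‖ / (ρ * (1 + δ / 4) - ‖z‖)
        + ‖g 0‖ * (ρ * (1 + δ / 4) + ‖z‖) / (ρ * (1 + δ / 4) - ‖z‖)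
      = 2 * (X + 1) * (‖z‖ / (ρ * (1 + δ / 4) - ‖z‖))
        + ‖g 0‖ * ((ρ * (1 + δ / 4) + ‖z‖) / (ρ * (1 + δ / 4) - ‖z‖)) := by ring
    _ ≤ 2 * (X + 1) * (4 / δ) + ‖g 0‖ * (12 / δ) := by gcongr
    _ = 128 * (C + 4 * log M) * (1 / δ ^ 2) + (8 + 12 * ‖g 0‖) * (1 / δ) := by
      rw [hX]; field_simp; ring
    _ ≤ 128 * ((C + 4) * (1 + log M)) * (1 / δ ^ 2)
        + ((8 + 12 * ‖g 0‖) * (1 + log M)) * (1 / δ ^ 2) := by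
      gcongr
      · nlinarith
      · nlinarith [norm_nonneg (g 0)]
    _ = _ := by ring

/-! ### The differential algebra of entire functions -/

/-- The algebra of entire functions of one complex variable. -/
def entireAlg : Subalgebra ℂ (ℂ → ℂ) where
  carrier := {f | Differentiable ℂ f}
  mul_mem' hf hg := Differentiable.mul hf hg
  add_mem' hf hg := Differentiable.add hf hg
  algebraMap_mem' c := differentiable_const c

instance : IsDomain entireAlg := by
  have : NoZeroDivisors entireAlg := ⟨by
    rintro ⟨f, hf⟩ ⟨g, hg⟩ h
    have h' : ∀ z ∈ Set.univ, f z * g z = 0 := fun z _ => congrFun (congrArg Subtype.val h) z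
    have := AnalyticOnNhd.eq_zero_or_eq_zero_of_mul_eq_zero
      (fun z _ => Differentiable.analyticAt hf z) (fun z _ => Differentiable.analyticAt hg z) h'
      isPreconnected_univ
    exact this.imp (fun h => Subtype.ext (funext fun z => h z trivial))
      (fun h => Subtype.ext (funext fun z => h z trivial))⟩
  have : Nontrivial entireAlg := ⟨0, 1, fun h => by
    have := congrFun (congrArg Subtype.val h) 0
    simp at this⟩
  exact NoZeroDivisors.to_isDomain _

/-- Differentiation, as a derivation of the algebra of entire functions. -/
noncomputable def entireDeriv : Derivation ℂ entireAlg entireAlg :=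
  Derivation.mk'
    { toFun := fun f => ⟨deriv f.1, fun z => (Differentiable.analyticAt f.2 z).deriv.differentiableAt⟩
      map_add' := fun f g => Subtype.ext (funext fun z => deriv_add (f.2 z) (g.2 z))
      map_smul' := fun c f => Subtype.ext (funext fun z => deriv_const_mul c (f.2 z)) }
    (fun f g => Subtype.ext (funext fun z => by
      have := deriv_mul (f.2 z) (g.2 z)
      simp only [LinearMap.coe_mk, AddHom.coe_mk, smul_eq_mul]
      refine this.trans ?_
      show _ = f.1 z * deriv g.1 z + g.1 z * deriv f.1 z
      ring))

lemma entireDeriv_coe (f : entireAlg) : (entireDeriv f : ℂ → ℂ) = deriv f.1 := rfl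

lemma entireDeriv_iterate (f : entireAlg) (s : ℕ) :
    ((entireDeriv^[s] f : entireAlg) : ℂ → ℂ) = iteratedDeriv s f.1 := by
  induction s with
  | zero => simp
  | succ s ih =>
    rw [Function.iterate_succ_apply', entireDeriv_coe, ih, iteratedDeriv_succ]

/-- Entire functions with vanishing Wronskian are proportional. -/
lemma entire_wronskian (x y : entireAlg) (hy : y ≠ 0)
    (h : y * entireDeriv x = x * entireDeriv y) : ∃ c : ℂ, x = c • y := by
  obtain ⟨w, hw⟩ : ∃ w, y.1 w ≠ 0 := by
    by_contra! hcon
    exact hy (Subtype.ext (funext hcon))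
  have hyc : Continuous y.1 := Differentiable.continuous y.2
  obtain ⟨ε, hε, hball⟩ := Metric.eventually_nhds_iff_ball.1 (hyc.continuousAt.eventually_ne hw)
  have hz : ∀ z, y.1 z * deriv x.1 z = x.1 z * deriv y.1 z :=
    fun z => congrFun (congrArg Subtype.val h) z
  have hconst : ∀ z ∈ Metric.ball w ε, x.1 z / y.1 z = x.1 w / y.1 w := by
    intro z hzb
    refine (convex_ball w ε).is_const_of_fderivWithin_eq_zero (𝕜 := ℂ) (f := fun z => x.1 z / y.1 z)
      (fun v hv => ((x.2 v).div (y.2 v) (hball v hv)).differentiableWithinAt) ?_ hzb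
      (Metric.mem_ball_self hε)
    intro v hv
    have hd : HasDerivAt (fun z => x.1 z / y.1 z) 0 v := by
      have := (x.2 v).hasDerivAt.div (y.2 v).hasDerivAt (hball v hv)
      have h0 : deriv x.1 v * y.1 v - x.1 v * deriv y.1 v = 0 := by
        rw [← hz v]; ring
      rwa [h0, zero_div] at this
    rw [fderivWithin_of_isOpen Metric.isOpen_ball hv]
    ext
    simp [hd.deriv]
  refine ⟨x.1 w / y.1 w, Subtype.ext ?_⟩
  refine AnalyticOnNhd.eq_of_eventuallyEq (𝕜 := ℂ) (z₀ := w)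
    (fun z _ => Differentiable.analyticAt x.2 z)
    (fun z _ => Differentiable.analyticAt (Subtype.prop ((x.1 w / y.1 w) • y)) z) ?_
  filter_upwards [Metric.ball_mem_nhds w hε] with z hzb
  have := hconst z hzb
  show x.1 z = x.1 w / y.1 w * y.1 z
  rw [← this, div_mul_cancel₀ _ (hball z hzb)]

/-! ### Growth estimates -/

/-- The maximum of `∑ ‖g i z‖` over the closed disc of radius `r`. Negative radii are replaced by `0`,
which makes the function monotone on all of `ℝ`. -/
noncomputable def growth {ι : Type*} [Fintype ι] (g : ι → ℂ → ℂ) (r : ℝ) : ℝ :=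
  sSup ((fun z => ∑ i, ‖g i z‖) '' Metric.closedBall (0 : ℂ) (max r 0))

section Growth

variable {ι : Type*} [Fintype ι] {g : ι → ℂ → ℂ}

lemma growth_bdd (hg : ∀ i, Differentiable ℂ (g i)) (r : ℝ) :
    BddAbove ((fun z => ∑ i, ‖g i z‖) '' Metric.closedBall (0 : ℂ) (max r 0)) := by
  refine ((isCompact_closedBall _ _).image ?_).bddAbove
  exact continuous_finsetSum _ fun i _ => (hg i).continuous.norm

lemma sum_norm_le_growth (hg : ∀ i, Differentiable ℂ (g i)) {r : ℝ} {z : ℂ} (hz : ‖z‖ ≤ r) :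
    ∑ i, ‖g i z‖ ≤ growth g r :=
  le_csSup (growth_bdd hg r) ⟨z, by simpa using Or.inl hz, rfl⟩

lemma norm_le_growth (hg : ∀ i, Differentiable ℂ (g i)) {r : ℝ} {z : ℂ} (hz : ‖z‖ ≤ r) (i : ι) :
    ‖g i z‖ ≤ growth g r :=
  (Finset.single_le_sum (f := fun i => ‖g i z‖) (fun i _ => norm_nonneg _)
    (Finset.mem_univ i)).trans (sum_norm_le_growth hg hz)

lemma growth_nonneg (r : ℝ) : 0 ≤ growth g r := by
  refine Real.sSup_nonneg ?_
  rintro _ ⟨z, _, rfl⟩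
  positivity

lemma growth_mono (hg : ∀ i, Differentiable ℂ (g i)) : Monotone (growth g) := by
  intro r s hrs
  refine csSup_le_csSup (growth_bdd hg s) ⟨_, 0, by simp, rfl⟩ (Set.image_mono ?_)
  exact Metric.closedBall_subset_closedBall (max_le_max_right 0 hrs)

lemma growth_le (r K : ℝ) (hr : 0 ≤ r) (h : ∀ z, ‖z‖ ≤ r → ∑ i, ‖g i z‖ ≤ K) :
    growth g r ≤ K := by
  refine csSup_le ⟨_, 0, by simp, rfl⟩ ?_
  rintro _ ⟨z, hz, rfl⟩
  exact h z (by simpa [max_eq_left hr] using hz)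

/-- `P` grows at most polynomially in `growth g`, with a loss that is polynomial in `1 / δ` when the
radius is enlarged by the factor `1 + δ`. Derivatives of the `g i` have this property by Cauchy's
estimates, and it is stable under sums and products. -/
def PolyBounded (g : ι → ℂ → ℂ) (P : ℂ → ℂ) : Prop :=
  ∃ C : ℝ, ∃ d : ℕ, 1 ≤ C ∧ ∀ ρ δ : ℝ, 1 ≤ ρ → 0 < δ → δ ≤ 1 → ∀ z : ℂ, ‖z‖ ≤ ρ →
    ‖P z‖ ≤ C * ((1 + growth g (ρ * (1 + δ))) / δ) ^ d

lemma one_le_growth_div (r δ : ℝ) (hδ : 0 < δ) (hδ1 : δ ≤ 1) : 1 ≤ (1 + growth g r) / δ := by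
  rw [le_div_iff₀ hδ]
  linarith [growth_nonneg (g := g) r]

lemma PolyBounded.add {P Q : ℂ → ℂ} (hP : PolyBounded g P) (hQ : PolyBounded g Q) :
    PolyBounded g (P + Q) := by
  obtain ⟨C, d, hC, h⟩ := hP
  obtain ⟨C', d', hC', h'⟩ := hQ
  refine ⟨C + C', d + d', by linarith, fun ρ δ hρ hδ hδ1 z hz => ?_⟩
  have hX := one_le_growth_div (g := g) (ρ * (1 + δ)) δ hδ hδ1
  calc ‖P z + Q z‖ ≤ ‖P z‖ + ‖Q z‖ := norm_add_le _ _
    _ ≤ C * ((1 + growth g (ρ * (1 + δ))) / δ) ^ d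
        + C' * ((1 + growth g (ρ * (1 + δ))) / δ) ^ d' :=
      add_le_add (h ρ δ hρ hδ hδ1 z hz) (h' ρ δ hρ hδ hδ1 z hz)
    _ ≤ C * ((1 + growth g (ρ * (1 + δ))) / δ) ^ (d + d')
        + C' * ((1 + growth g (ρ * (1 + δ))) / δ) ^ (d + d') := by
      gcongr <;> omega
    _ = _ := by ring

lemma PolyBounded.mul {P Q : ℂ → ℂ} (hP : PolyBounded g P) (hQ : PolyBounded g Q) :
    PolyBounded g (P * Q) := by
  obtain ⟨C, d, hC, h⟩ := hP
  obtain ⟨C', d', hC', h'⟩ := hQ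
  refine ⟨C * C', d + d', by nlinarith, fun ρ δ hρ hδ hδ1 z hz => ?_⟩
  have hX := one_le_growth_div (g := g) (ρ * (1 + δ)) δ hδ hδ1
  calc ‖P z * Q z‖ = ‖P z‖ * ‖Q z‖ := norm_mul _ _
    _ ≤ (C * ((1 + growth g (ρ * (1 + δ))) / δ) ^ d)
        * (C' * ((1 + growth g (ρ * (1 + δ))) / δ) ^ d') :=
      mul_le_mul (h ρ δ hρ hδ hδ1 z hz) (h' ρ δ hρ hδ hδ1 z hz) (norm_nonneg _) (by positivity)
    _ = _ := by ring

lemma polyBounded_const (c : ℂ) : PolyBounded g (fun _ => c) :=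
  ⟨1 + ‖c‖, 0, by simp, fun ρ δ _ _ _ z _ => by simp⟩

lemma polyBounded_iteratedDeriv (hg : ∀ i, Differentiable ℂ (g i)) (i : ι) (s : ℕ) :
    PolyBounded g (iteratedDeriv (s + 1) (g i)) := by
  refine ⟨(s + 1).factorial, s + 1, by exact_mod_cast Nat.succ_le_of_lt (Nat.factorial_pos _),
    fun ρ δ hρ hδ hδ1 z hz => ?_⟩
  have hG := growth_nonneg (g := g) (ρ * (1 + δ))
  have hc := Complex.norm_iteratedDeriv_le_of_forall_mem_sphere_norm_le (s + 1) hδ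
    (hg i).diffContOnCl (c := z) (C := growth g (ρ * (1 + δ))) (fun w hw => by
      refine norm_le_growth hg ?_ i
      have h1 : ‖w - z‖ = δ := by simpa [dist_eq_norm] using hw
      have h2 : ‖w‖ ≤ ‖w - z‖ + ‖z‖ := by simpa using norm_add_le (w - z) z
      nlinarith)
  refine hc.trans ?_
  rw [mul_div_assoc, div_pow]
  gcongr
  calc growth g (ρ * (1 + δ)) ≤ 1 + growth g (ρ * (1 + δ)) := by linarith
    _ ≤ _ := le_self_pow₀ (by linarith) (by omega)

/-- The self-improving estimate: if `exp (g i)` is a quotient of functions of polynomial growth in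
`growth g`, then `g i` is of logarithmic growth in `growth g`. -/
lemma exists_log_bound (hg : ∀ i, Differentiable ℂ (g i)) (i : ι) {A B : ℂ → ℂ}
    (hA : Differentiable ℂ A) (hB : Differentiable ℂ B) (hA0 : A ≠ 0)
    (hAP : PolyBounded g A) (hBP : PolyBounded g B)
    (h : ∀ z, A z * Complex.exp (g i z) = B z) :
    ∃ C : ℝ, 0 < C ∧ ∀ ρ δ : ℝ, 1 ≤ ρ → 0 < δ → δ ≤ 1 → ∀ z : ℂ, ‖z‖ ≤ ρ →
      ‖g i z‖ ≤ C / δ ^ 3 * (1 + Real.log (1 + growth g (ρ * (1 + δ)))) := by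
  obtain ⟨C, hC, hmain⟩ := norm_le_of_quotient hA hB (hg i) hA0 h
  obtain ⟨C₁, d₁, hC₁, h₁⟩ := hAP
  obtain ⟨C₂, d₂, hC₂, h₂⟩ := hBP
  have hlogC : 0 ≤ Real.log (C₁ * C₂) := Real.log_nonneg (by nlinarith)
  refine ⟨(C + 1) * (1 + Real.log (C₁ * C₂) + (d₁ + d₂ : ℕ) * 4), by positivity,
    fun ρ δ hρ hδ hδ1 z hz => ?_⟩
  set L := Real.log (1 + growth g (ρ * (1 + δ))) with hL
  have hG := growth_nonneg (g := g) (ρ * (1 + δ))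
  have hL0 : 0 ≤ L := Real.log_nonneg (by linarith)
  set X := (1 + growth g (ρ * (1 + δ))) / (δ / 4) with hX
  have hX1 : 1 ≤ X := one_le_growth_div _ _ (by positivity) (by linarith)
  set M := C₁ * C₂ * X ^ (d₁ + d₂) with hM
  have hpow := one_le_pow₀ (n := d₁ + d₂) hX1
  have hM1 : 1 ≤ M := by
    have : 1 ≤ C₁ * C₂ := by nlinarith
    nlinarith
  have hrad : ρ * (1 + δ / 2) * (1 + δ / 4) ≤ ρ * (1 + δ) := by
    rw [mul_assoc]
    gcongr
    nlinarith
  have hXle : (1 + growth g (ρ * (1 + δ / 2) * (1 + δ / 4))) / (δ / 4) ≤ X := by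
    rw [hX]
    gcongr
    exact growth_mono hg hrad
  have hX1' := one_le_growth_div (g := g) (ρ * (1 + δ / 2) * (1 + δ / 4)) (δ / 4)
    (by positivity) (by linarith)
  have hb := hmain ρ δ M hρ hδ hδ1 hM1 (fun w hw => by
    have hw' : ‖w‖ ≤ ρ * (1 + δ / 2) := by simpa using hw
    have e₁ := h₁ (ρ * (1 + δ / 2)) (δ / 4) (by nlinarith) (by positivity) (by linarith) w hw'
    have e₂ := h₂ (ρ * (1 + δ / 2)) (δ / 4) (by nlinarith) (by positivity) (by linarith) w hw'
    constructor
    · refine e₁.trans ?_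
      rw [hM]
      gcongr ?_ * ?_
      · nlinarith
      · calc _ ≤ X ^ d₁ := by gcongr
          _ ≤ X ^ (d₁ + d₂) := pow_le_pow_right₀ hX1 (by omega)
    · refine e₂.trans ?_
      rw [hM]
      gcongr ?_ * ?_
      · nlinarith
      · calc _ ≤ X ^ d₂ := by gcongr
          _ ≤ X ^ (d₁ + d₂) := pow_le_pow_right₀ hX1 (by omega)) z (by simpa using hz)
  refine hb.trans ?_
  have hlogX : Real.log X ≤ L + 4 / δ := by
    rw [hX, div_eq_mul_inv, Real.log_mul (by positivity) (by positivity), ← hL]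
    have := Real.log_le_sub_one_of_pos (show 0 < (δ / 4)⁻¹ by positivity)
    have h2 : (δ / 4)⁻¹ = 4 / δ := by rw [inv_div]
    rw [h2] at this ⊢
    linarith
  have hlogM : Real.log M ≤ Real.log (C₁ * C₂) + (d₁ + d₂ : ℕ) * (L + 4 / δ) := by
    rw [hM, Real.log_mul (by positivity) (by positivity), Real.log_pow]
    gcongr
  have hone : 1 ≤ 1 / δ := by rw [le_div_iff₀ hδ]; linarith
  have hd0 : (0 : ℝ) ≤ (d₁ + d₂ : ℕ) := Nat.cast_nonneg _
  have key : 1 + Real.log M ≤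
      (1 + Real.log (C₁ * C₂) + (d₁ + d₂ : ℕ) * 4) * (1 + L) * (1 / δ) := by
    have e1 : L + 4 / δ ≤ 4 * (1 + L) * (1 / δ) := by
      have : 4 / δ = 4 * (1 / δ) := by ring
      rw [this]
      nlinarith
    have e2 : 1 + Real.log (C₁ * C₂) ≤ (1 + Real.log (C₁ * C₂)) * (1 + L) * (1 / δ) := by
      have h3 : 1 ≤ (1 + L) * (1 / δ) := by nlinarith
      rw [mul_assoc]
      exact le_mul_of_one_le_right (by linarith) h3
    have e3 := mul_le_mul_of_nonneg_left e1 hd0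
    linarith
  calc C / δ ^ 2 * (1 + Real.log M)
      ≤ (C + 1) / δ ^ 2 *
        ((1 + Real.log (C₁ * C₂) + (d₁ + d₂ : ℕ) * 4) * (1 + L) * (1 / δ)) := by
        have : 0 ≤ Real.log M := Real.log_nonneg hM1
        gcongr
        linarith
    _ = _ := by field_simp

end Growth

/-! ### Borel's lemma in one variable -/

/-- Borel's lemma for a relation none of whose proper nonempty partial sums vanishes. After division
by `F j` the functions are `exp (g i)`. Each of them is a quotient of elements of the ring generated
by the derivatives of the `g i`, so that `exists_log_bound` and `bounded_of_growth` make the `g i`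
bounded, hence constant. -/
lemma div_const_of_indecomposable {ι : Type*} [Fintype ι] (F : ι → ℂ → ℂ)
    (hF : ∀ i, Differentiable ℂ (F i)) (h0 : ∀ i z, F i z ≠ 0) (hsum : ∀ z, ∑ i, F i z = 0)
    (hind : ∀ U : Finset ι, U.Nonempty → (∀ z, ∑ i ∈ U, F i z = 0) → U = Finset.univ)
    (i j : ι) : ∃ c : ℂ, ∀ z, F i z = c * F j z := by
  choose g hg hexp using fun i => exists_entire_log_s11 (f := fun z => F i z / F j z)
    (fun z => (hF i z).div (hF j z) (h0 j z)) (fun z => div_ne_zero (h0 i z) (h0 j z))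
  set G : ι → entireAlg := fun i => ⟨g i, hg i⟩ with hG
  set u : ι → entireAlg := fun i => ⟨fun z => Complex.exp (g i z), (hg i).cexp⟩ with hu
  have hu0 : ∀ i, u i ≠ 0 := fun i h =>
    Complex.exp_ne_zero _ (congrFun (congrArg Subtype.val h) 0)
  have hDu : ∀ i, entireDeriv (u i) = u i * entireDeriv (G i) := fun i =>
    Subtype.ext (funext fun z => (hg i z).hasDerivAt.cexp.deriv)
  set X : Set entireAlg := {x | ∃ i s, x = entireDeriv^[s + 1] (G i)} with hX
  set R := Algebra.adjoin ℂ X with hR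
  have hDR : ∀ x ∈ R, entireDeriv x ∈ R := by
    intro x hx
    induction hx using Algebra.adjoin_induction with
    | mem x hx =>
      obtain ⟨i, s, rfl⟩ := hx
      exact Algebra.subset_adjoin ⟨i, s + 1, (Function.iterate_succ_apply' _ _ _).symm⟩
    | algebraMap c => rw [Derivation.map_algebraMap]; exact R.zero_mem
    | add x y _ _ hx hy => rw [map_add]; exact R.add_mem hx hy
    | mul x y hx' hy' hx hy =>
      rw [Derivation.leibniz]
      exact R.add_mem (R.mul_mem hx' hy) (R.mul_mem hy' hx)
  have hbR : ∀ x ∈ R, PolyBounded g x.1 := by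
    intro x hx
    induction hx using Algebra.adjoin_induction with
    | mem x hx =>
      obtain ⟨i, s, rfl⟩ := hx
      rw [entireDeriv_iterate]
      exact polyBounded_iteratedDeriv hg i s
    | algebraMap c => exact polyBounded_const c
    | add x y _ _ hx hy => exact hx.add hy
    | mul x y _ _ hx hy => exact hx.mul hy
  have hsumF : ∀ U : Finset ι, ∀ z, (∑ i ∈ U, (1 : entireAlg) * u i).1 z
      = (∑ i ∈ U, F i z) / F j z := by
    intro U z
    rw [Finset.sum_div]
    have : (∑ i ∈ U, (1 : entireAlg) * u i).1 = ∑ i ∈ U, (u i).1 := by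
      simp only [one_mul]
      exact map_sum entireAlg.val _ _
    rw [this, Finset.sum_apply]
    exact Finset.sum_congr rfl fun i _ => (hexp i z).symm
  have huj : u j = 1 := Subtype.ext (funext fun z => by
    show Complex.exp (g j z) = 1
    rw [← hexp j z, div_self (h0 j z)])
  have hlog : ∀ i, ∃ C : ℝ, 0 < C ∧ ∀ ρ δ : ℝ, 1 ≤ ρ → 0 < δ → δ ≤ 1 → ∀ z : ℂ, ‖z‖ ≤ ρ →
      ‖g i z‖ ≤ C / δ ^ 3 * (1 + Real.log (1 + growth g (ρ * (1 + δ)))) := by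
    intro i
    obtain ⟨a, ha, b, hb, ha0, -, hab⟩ := ratio_mem_of_indecomposable entireDeriv R hDR
      entire_wronskian u (fun i => entireDeriv (G i))
      (fun i => Algebra.subset_adjoin ⟨i, 0, rfl⟩) hDu hu0 _ Finset.univ (fun _ => 1) rfl
      (fun i _ => ⟨R.one_mem, one_ne_zero⟩)
      (Subtype.ext (funext fun z => by rw [hsumF, hsum, zero_div]; rfl))
      (fun U _ hU h => hind U hU fun z => by
        have := hsumF U z
        rw [h] at this
        exact (div_eq_zero_iff.1 this.symm).resolve_right (h0 j z))
      i (Finset.mem_univ i) j (Finset.mem_univ j)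
    rw [huj, mul_one] at hab
    exact exists_log_bound hg i a.2 b.2 (fun h => ha0 (Subtype.ext h)) (hbR a ha) (hbR b hb)
      (fun z => congrFun (congrArg Subtype.val hab) z)
  choose C hC hlogC using hlog
  have hCpos : 0 < ∑ i, C i := Finset.sum_pos (fun i _ => hC i) ⟨j, Finset.mem_univ j⟩
  obtain ⟨K, hK⟩ := bounded_of_growth (growth g) growth_nonneg (growth_mono hg) (∑ i, C i) hCpos 3
    (fun ρ hρ δ hδ hδ1 => growth_le _ _ (by linarith) fun z hz => by
      rw [Finset.sum_div, Finset.sum_mul]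
      exact Finset.sum_le_sum fun i _ => hlogC i ρ δ hρ hδ hδ1 z hz)
  obtain ⟨c, hc⟩ := (hg i).exists_const_forall_eq_of_bounded (by
    rw [isBounded_iff_forall_norm_le]
    refine ⟨K, ?_⟩
    rintro _ ⟨z, rfl⟩
    exact (norm_le_growth hg (le_max_left _ 1) i).trans (hK _ (le_max_right _ _)))
  refine ⟨Complex.exp c, fun z => ?_⟩
  rw [← hc z, ← hexp i z, div_mul_cancel₀ _ (h0 j z)]

/-- Borel's lemma on `ℂ`, by induction on the number of terms: if a proper partial sum vanishes, then
so does the complementary one, and `i` belongs to one of the two. -/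
lemma borel_one_variable {ι : Type*} (F : ι → ℂ → ℂ)
    (hF : ∀ i, Differentiable ℂ (F i)) (h0 : ∀ i z, F i z ≠ 0) (k : ℕ) :
    ∀ S : Finset ι, S.card = k → (∀ z, ∑ i ∈ S, F i z = 0) → ∀ i ∈ S,
      ∃ j ∈ S, j ≠ i ∧ ∃ c : ℂ, ∀ z, F i z = c * F j z := by
  classical
  induction k using Nat.strong_induction_on with
  | _ k ih =>
  intro S hk hsum i hi
  by_cases hU : ∃ U ⊂ S, U.Nonempty ∧ ∀ z, ∑ i ∈ U, F i z = 0
  · obtain ⟨U, hUS, hne, hU0⟩ := hU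
    by_cases hiU : i ∈ U
    · obtain ⟨j, hj, h⟩ := ih _ (hk ▸ Finset.card_lt_card hUS) U rfl hU0 i hiU
      exact ⟨j, hUS.1 hj, h⟩
    · obtain ⟨j, hj, h⟩ := ih _ (hk ▸ Finset.card_lt_card (Finset.sdiff_ssubset hUS.1 hne))
        (S \ U) rfl (fun z => by
          have := Finset.sum_sdiff (f := fun i => F i z) hUS.1
          rw [hU0, hsum, add_zero] at this
          exact this) i (Finset.mem_sdiff.2 ⟨hi, hiU⟩)
      exact ⟨j, (Finset.mem_sdiff.1 hj).1, h⟩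
  · push Not at hU
    obtain ⟨j, hj, hji⟩ : ∃ j ∈ S, j ≠ i := by
      by_contra! hcon
      have := hsum 0
      rw [Finset.eq_singleton_iff_unique_mem.2 ⟨hi, hcon⟩, Finset.sum_singleton] at this
      exact h0 i 0 this
    refine ⟨j, hj, hji, ?_⟩
    refine div_const_of_indecomposable (fun l : {x // x ∈ S} => F l.1) (fun l => hF l.1)
      (fun l => h0 l.1) (fun z => ?_) (fun U hne hU0 => ?_) ⟨i, hi⟩ ⟨j, hj⟩
    · rw [← hsum z]
      exact Finset.sum_coe_sort S fun i => F i z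
    · by_contra hUu
      have hsub : U.map (Function.Embedding.subtype _) ⊆ S := by
        intro x hx
        obtain ⟨y, -, rfl⟩ := Finset.mem_map.1 hx
        exact y.2
      have hssub : U.map (Function.Embedding.subtype _) ⊂ S := by
        refine hsub.ssubset_of_ne fun h => hUu ?_
        refine Finset.eq_univ_iff_forall.2 fun x => ?_
        have hx : x.1 ∈ U.map (Function.Embedding.subtype (· ∈ S)) := by
          rw [h]; exact x.2
        simpa using hx
      obtain ⟨z, hz⟩ := hU _ hssub (hne.map)
      refine hz ?_
      rw [Finset.sum_map]
      exact hU0 z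

/-! ### Borel's lemma in several variables -/

section SeveralVariables

variable {V : Type*} [NormedAddCommGroup V] [NormedSpace ℂ V]

lemma eq_zero_or_eq_zero_of_differentiable {f g : V → ℂ} (hf : Differentiable ℂ f)
    (hg : Differentiable ℂ g) (h : ∀ z, f z * g z = 0) : (∀ z, f z = 0) ∨ ∀ z, g z = 0 := by
  by_contra! hcon
  obtain ⟨⟨p, hp⟩, q, hq⟩ := hcon
  set l : ℂ → V := fun t => p + t • (q - p) with hl
  have hld : Differentiable ℂ l := by fun_prop
  have := AnalyticOnNhd.eq_zero_or_eq_zero_of_mul_eq_zero (U := Set.univ)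
    (fun z _ => Differentiable.analyticAt (hf.comp hld) z)
    (fun z _ => Differentiable.analyticAt (hg.comp hld) z) (fun t _ => h (l t)) isPreconnected_univ
  rcases this with h1 | h1
  · exact hp (by simpa [hl] using h1 0 trivial)
  · exact hq (by simpa [hl] using h1 1 trivial)

lemma differentiable_prod {ι : Type*} (T : Finset ι) (f : ι → V → ℂ)
    (hf : ∀ i, Differentiable ℂ (f i)) : Differentiable ℂ fun z => ∏ i ∈ T, f i z := by
  classical
  induction T using Finset.induction_on with
  | empty => simp
  | insert a T ha ih =>
    simp only [Finset.prod_insert ha]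
    exact (hf a).mul ih

lemma exists_eq_zero_of_prod {ι : Type*} (T : Finset ι) (f : ι → V → ℂ)
    (hf : ∀ i, Differentiable ℂ (f i)) (h : ∀ z, ∏ i ∈ T, f i z = 0) :
    ∃ i ∈ T, ∀ z, f i z = 0 := by
  classical
  induction T using Finset.induction_on with
  | empty => simpa using h 0
  | insert a T ha ih =>
    simp only [Finset.prod_insert ha] at h
    rcases eq_zero_or_eq_zero_of_differentiable (hf a)
      (differentiable_prod T f hf) h with h1 | h1
    · exact ⟨a, Finset.mem_insert_self _ _, h1⟩
    · obtain ⟨i, hi, h2⟩ := ih h1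
      exact ⟨i, Finset.mem_insert_of_mem hi, h2⟩

/-- Borel's lemma on a complex normed space. On the line through `0` and `z`, the term `F i` is a
multiple of some `F j`, whence `F i z * F j 0 = F j z * F i 0` for a `j` depending on `z`. The
product over `j` of the differences is therefore identically zero, and so is one of its factors. -/
lemma borel_lemma_s11 {ι : Type*} (F : ι → V → ℂ)
    (hF : ∀ i, Differentiable ℂ (F i)) (h0 : ∀ i z, F i z ≠ 0)
    (S : Finset ι) (hsum : ∀ z, ∑ i ∈ S, F i z = 0) (i : ι) (hi : i ∈ S) :
    ∃ j ∈ S, j ≠ i ∧ ∃ c : ℂ, c ≠ 0 ∧ ∀ z, F j z = c * F i z := by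
  classical
  obtain ⟨j, hj, h⟩ := exists_eq_zero_of_prod (S.erase i)
    (fun j z => F i z * F j 0 - F j z * F i 0)
    (fun j => ((hF i).mul_const _).sub ((hF j).mul_const _)) (fun z => by
      obtain ⟨j, hj, hji, c, hc⟩ := borel_one_variable (fun i (t : ℂ) => F i (t • z))
        (fun i => (hF i).comp (by fun_prop)) (fun i t => h0 i _) _ S rfl (fun t => hsum _) i hi
      refine Finset.prod_eq_zero (Finset.mem_erase.2 ⟨hji, hj⟩) ?_
      have h1 := hc 0
      have h2 := hc 1
      simp only [zero_smul, one_smul] at h1 h2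
      rw [h1, h2]; ring)
  refine ⟨j, Finset.mem_of_mem_erase hj, Finset.ne_of_mem_erase hj, F j 0 / F i 0,
    div_ne_zero (h0 j 0) (h0 i 0), fun z => ?_⟩
  have := h z
  field_simp [h0 i 0]
  linear_combination -this

end SeveralVariables

/-! ### Laplace expansion -/

section Laplace

variable {N n : ℕ}

lemma sub_lt_of_fin (j : Fin (N + n + 2)) : (j : ℕ) - (n + 1) < N + 1 := by
  have := j.isLt
  omega

/-- A vector of length `n + 1`, extended by zeros to the last `N + 1` coordinates. -/
def leftBlock : (Fin (n + 1) → ℂ) →ₗ[ℂ] (Fin (N + n + 2) → ℂ) where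
  toFun v j := if hj : (j : ℕ) < n + 1 then v ⟨j, hj⟩ else 0
  map_add' v w := by ext j; simp only [Pi.add_apply]; split_ifs <;> simp
  map_smul' c v := by ext j; simp only [Pi.smul_apply, RingHom.id_apply]; split_ifs <;> simp

/-- A vector of length `N + 1`, put in the last `N + 1` coordinates and preceded by zeros. -/
def rightBlock : (Fin (N + 1) → ℂ) →ₗ[ℂ] (Fin (N + n + 2) → ℂ) where
  toFun v j := if (j : ℕ) < n + 1 then 0 else v ⟨(j : ℕ) - (n + 1), sub_lt_of_fin j⟩
  map_add' v w := by ext j; simp only [Pi.add_apply]; split_ifs <;> simp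
  map_smul' c v := by ext j; simp only [Pi.smul_apply, RingHom.id_apply]; split_ifs <;> simp

lemma leftBlock_apply_of_lt (v : Fin (n + 1) → ℂ) (j : Fin (N + n + 2)) (hj : (j : ℕ) < n + 1) :
    leftBlock v j = v ⟨j, hj⟩ := dif_pos hj

lemma leftBlock_apply_of_not_lt (v : Fin (n + 1) → ℂ) (j : Fin (N + n + 2))
    (hj : ¬(j : ℕ) < n + 1) : leftBlock v j = 0 := dif_neg hj

lemma rightBlock_apply_of_lt (w : Fin (N + 1) → ℂ) (j : Fin (N + n + 2)) (hj : (j : ℕ) < n + 1) :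
    rightBlock w j = 0 := if_pos hj

lemma rightBlock_apply_of_not_lt (w : Fin (N + 1) → ℂ) (j : Fin (N + n + 2))
    (hj : ¬(j : ℕ) < n + 1) :
    rightBlock w j = w ⟨(j : ℕ) - (n + 1), sub_lt_of_fin j⟩ := if_neg hj

lemma leftBlock_add_rightBlock_eq_zero {v : Fin (n + 1) → ℂ} {w : Fin (N + 1) → ℂ}
    (h : leftBlock (N := N) v + rightBlock w = 0) : v = 0 ∧ w = 0 := by
  constructor
  · ext j
    have := congrFun h ⟨j, by omega⟩
    rw [Pi.add_apply, leftBlock_apply_of_lt _ _ j.isLt, rightBlock_apply_of_lt _ _ j.isLt,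
      add_zero] at this
    exact this
  · ext j
    have := congrFun h ⟨n + 1 + j, by omega⟩
    rw [Pi.add_apply, leftBlock_apply_of_not_lt _ _ (by simp; omega),
      rightBlock_apply_of_not_lt _ _ (by simp; omega), zero_add] at this
    simpa using this

variable (a : Fin (N + n + 2) → Fin (n + 1) → ℂ) (b : Fin (N + n + 2) → Fin (N + 1) → ℂ)

/-- The matrix whose `i`-th row is the `b`-part of row `i` for `i ∈ S`, and the `a`-part of row `i`
otherwise. -/
noncomputable def laplaceRows (S : Finset (Fin (N + n + 2))) :
    Fin (N + n + 2) → Fin (N + n + 2) → ℂ :=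
  S.piecewise (fun i => rightBlock (b i)) (fun i => leftBlock (a i))

lemma laplaceRows_of_mem {S : Finset (Fin (N + n + 2))} {i : Fin (N + n + 2)} (hi : i ∈ S) :
    laplaceRows a b S i = rightBlock (b i) := Finset.piecewise_eq_of_mem _ _ _ hi

lemma laplaceRows_of_notMem {S : Finset (Fin (N + n + 2))} {i : Fin (N + n + 2)} (hi : i ∉ S) :
    laplaceRows a b S i = leftBlock (a i) := Finset.piecewise_eq_of_notMem _ _ _ hi

/-- The coefficient of the monomial `∏ i ∈ S, x i` in the expansion of the determinant; it is, up to
sign, the product of two complementary minors of `a` and `b` when `S` has `N + 1` elements. -/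
noncomputable def laplaceCoeff (S : Finset (Fin (N + n + 2))) : ℂ :=
  Matrix.det (Matrix.of (laplaceRows a b S))

lemma laplace_expansion (x : Fin (N + n + 2) → ℂ) :
    Matrix.det (Matrix.of (fun i j : Fin (N + n + 2) =>
        if hj : (j : ℕ) < n + 1 then a i ⟨j, hj⟩
        else b i ⟨(j : ℕ) - (n + 1), sub_lt_of_fin j⟩ * x i)) =
      ∑ S, laplaceCoeff a b S * ∏ i ∈ S, x i := by
  have hM : (Matrix.of (fun i j : Fin (N + n + 2) =>
        if hj : (j : ℕ) < n + 1 then a i ⟨j, hj⟩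
        else b i ⟨(j : ℕ) - (n + 1), sub_lt_of_fin j⟩ * x i)) =
      Matrix.of ((fun i => x i • rightBlock (b i)) + fun i => leftBlock (a i)) := by
    ext i j
    by_cases hj : (j : ℕ) < n + 1
    · simp only [Matrix.of_apply, Pi.add_apply, Pi.smul_apply, dif_pos hj,
        leftBlock_apply_of_lt _ _ hj, rightBlock_apply_of_lt _ _ hj, smul_zero, zero_add]
    · simp only [Matrix.of_apply, Pi.add_apply, Pi.smul_apply, dif_neg hj, smul_eq_mul,
        leftBlock_apply_of_not_lt _ _ hj, rightBlock_apply_of_not_lt _ _ hj, add_zero, mul_comm]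
  rw [hM]
  refine (Matrix.detRowAlternating.toMultilinearMap.map_add_univ
    (fun i => x i • rightBlock (b i)) fun i => leftBlock (a i)).trans ?_
  refine Finset.sum_congr rfl fun S _ => ?_
  have hS : S.piecewise (fun i => x i • rightBlock (b i)) (fun i => leftBlock (a i)) =
      fun i => S.piecewise x 1 i • laplaceRows a b S i := by
    funext i
    by_cases hi : i ∈ S
    · rw [laplaceRows_of_mem a b hi, Finset.piecewise_eq_of_mem _ _ _ hi,
        Finset.piecewise_eq_of_mem _ _ _ hi]
    · rw [laplaceRows_of_notMem a b hi, Finset.piecewise_eq_of_notMem _ _ _ hi,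
        Finset.piecewise_eq_of_notMem _ _ _ hi, Pi.one_apply, one_smul]
  rw [hS, MultilinearMap.map_smul_univ, Finset.prod_piecewise]
  simp only [Finset.univ_inter, Pi.one_apply, Finset.prod_const_one, mul_one, smul_eq_mul]
  exact mul_comm _ _

lemma laplaceCoeff_ne_zero (S : Finset (Fin (N + n + 2)))
    (hb : LinearIndependent ℂ (fun i : {x // x ∈ S} => b i.1))
    (ha : LinearIndependent ℂ (fun i : {x // x ∈ Sᶜ} => a i.1)) : laplaceCoeff a b S ≠ 0 := by
  intro h
  have hli : LinearIndependent ℂ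
      (Matrix.of (laplaceRows a b S)).row := by
    rw [Fintype.linearIndependent_iff]
    intro c hc
    have hsplit : leftBlock (N := N) (∑ i ∈ Sᶜ, c i • a i) + rightBlock (∑ i ∈ S, c i • b i) = 0 := by
      refine Eq.trans ?_ ((Finset.sum_add_sum_compl S _).trans hc)
      rw [add_comm (leftBlock _), map_sum, map_sum]
      congr 1 <;> refine Finset.sum_congr rfl fun i hi => ?_
      · rw [map_smul, ← laplaceRows_of_mem a b hi]; rfl
      · rw [map_smul, ← laplaceRows_of_notMem a b (Finset.mem_compl.1 hi)]; rfl
    obtain ⟨h1, h2⟩ := leftBlock_add_rightBlock_eq_zero hsplit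
    rw [← Finset.sum_coe_sort] at h1 h2
    intro i
    by_cases hi : i ∈ S
    · exact Fintype.linearIndependent_iff.1 hb (fun i => c i.1) h2 ⟨i, hi⟩
    · exact Fintype.linearIndependent_iff.1 ha (fun i => c i.1) h1 ⟨i, Finset.mem_compl.2 hi⟩
  have := (Matrix.isUnit_iff_isUnit_det _).1 (Matrix.linearIndependent_rows_iff_isUnit.1 hli)
  exact this.ne_zero h

/-- A nonzero coefficient requires `S` to index independent vectors in dimension `N + 1` and its
complement to index independent vectors in dimension `n + 1`; there are `N + n + 2` indices. -/
lemma laplaceCoeff_eq_zero (S : Finset (Fin (N + n + 2))) (hS : S.card ≠ N + 1) :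
    laplaceCoeff a b S = 0 := by
  refine Matrix.det_eq_zero_of_not_linearIndependent_rows fun h => hS ?_
  replace h : LinearIndependent ℂ (laplaceRows a b S) := h
  have h1 : LinearIndependent ℂ (fun i : {x // x ∈ S} => b i.1) := by
    have h' := h.comp (fun i : {x // x ∈ S} => i.1) Subtype.val_injective
    have e : laplaceRows a b S ∘ (fun i : {x // x ∈ S} => i.1) =
        rightBlock ∘ fun i : {x // x ∈ S} => b i.1 :=
      funext fun i => laplaceRows_of_mem a b i.2
    rw [e] at h'
    exact LinearIndependent.of_comp _ h'
  have h2 : LinearIndependent ℂ (fun i : {x // x ∈ Sᶜ} => a i.1) := by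
    have h' := h.comp (fun i : {x // x ∈ Sᶜ} => i.1) Subtype.val_injective
    have e : laplaceRows a b S ∘ (fun i : {x // x ∈ Sᶜ} => i.1) =
        leftBlock ∘ fun i : {x // x ∈ Sᶜ} => a i.1 :=
      funext fun i => laplaceRows_of_notMem a b (Finset.mem_compl.1 i.2)
    rw [e] at h'
    exact LinearIndependent.of_comp _ h'
  have h3 := h1.fintype_card_le_finrank
  have h4 := h2.fintype_card_le_finrank
  have h5 := Finset.card_add_card_compl S
  simp only [Fintype.card_coe, Module.finrank_fin_fun, Fintype.card_fin] at h3 h4 h5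
  omega

end Laplace

theorem stmt11 {m N n : ℕ} (hn : 1 ≤ n) (hNn : n ≤ N)
    (h : Fin (N + n + 2) → ((Fin m → ℂ) → ℂ))
    (hdiff : ∀ i, Differentiable ℂ (h i)) (hnz : ∀ i z, h i z ≠ 0)
    (a : Fin (N + n + 2) → Fin (n + 1) → ℂ) (b : Fin (N + n + 2) → Fin (N + 1) → ℂ)
    -- all the relevant minors of the coefficient matrices are nonzero, expressed as
    -- linear independence of the corresponding `N+1` rows of `b` and `n+1` rows of `a`
    (hminors : ∀ S : Finset (Fin (N + n + 2)), S.card = N + 1 →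
      LinearIndependent ℂ (fun i : {x // x ∈ S} => b i.1) ∧
      LinearIndependent ℂ (fun i : {x // x ∈ Sᶜ} => a i.1))
    -- the determinant of the matrix with rows (aⁱ₀,…,aⁱₙ, bⁱ₀hᵢ,…,bⁱ_N hᵢ) vanishes
    (hdet : ∀ z : Fin m → ℂ,
      Matrix.det (Matrix.of (fun i j : Fin (N + n + 2) =>
        if hj : (j : ℕ) < n + 1 then a i ⟨j, hj⟩
        else b i ⟨(j : ℕ) - (n + 1), by have := j.isLt; omega⟩ * h i z)) = 0) :
    ∀ I : Finset (Fin (N + n + 2)), I.card = N + 1 →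
      ∃ J : Finset (Fin (N + n + 2)), J.card = N + 1 ∧ J ≠ I ∧
        ∃ c : ℂ, c ≠ 0 ∧ ∀ z, (∏ j ∈ J, h j z) = c * ∏ i ∈ I, h i z := by
  intro I hI
  set F : {S : Finset (Fin (N + n + 2)) // S.card = N + 1} → (Fin m → ℂ) → ℂ :=
    fun S z => laplaceCoeff a b S.1 * ∏ i ∈ S.1, h i z with hF
  have hcoeff : ∀ S : {S : Finset (Fin (N + n + 2)) // S.card = N + 1},
      laplaceCoeff a b S.1 ≠ 0 := fun S =>
    laplaceCoeff_ne_zero a b S.1 (hminors S.1 S.2).1 (hminors S.1 S.2).2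
  obtain ⟨J, -, hJI, c, hc, hJ⟩ := borel_lemma_s11 F
    (fun S => (differentiable_prod _ _ hdiff).const_mul _)
    (fun S z => mul_ne_zero (hcoeff S) (Finset.prod_ne_zero_iff.2 fun i _ => hnz i z))
    Finset.univ (fun z => by
      rw [← hdet z, laplace_expansion a b fun i => h i z]
      rw [← Finset.sum_subtype (Finset.univ.filter fun S => S.card = N + 1) (by simp)
        fun S => laplaceCoeff a b S * ∏ i ∈ S, h i z]
      refine Finset.sum_subset (Finset.filter_subset _ _) fun S _ hS => ?_
      rw [laplaceCoeff_eq_zero a b S (by simpa using hS), zero_mul]) ⟨I, hI⟩ (Finset.mem_univ _)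
  refine ⟨J.1, J.2, fun h => hJI (Subtype.ext h),
    c * laplaceCoeff a b I / laplaceCoeff a b J.1,
    div_ne_zero (mul_ne_zero hc (hcoeff ⟨I, hI⟩)) (hcoeff J), fun z => ?_⟩
  have h1 := hJ z
  simp only [hF] at h1
  have h2 := hcoeff J
  field_simp
  linear_combination h1
end
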